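/- arXiv:2505.17523 — 3 statements merged into one kernel-verified Lean document; each statement's English description precedes it below -/
import Mathlib

section
/- Suppose T ⊆ 𝔹 satisfies T̃ = T, let 𝔹_𝔭 be an orbit with T_𝔭 ≠ 𝔹_𝔭, and let τ ∈ 𝔹_𝔭 − T_𝔭. Set s = |𝔹_𝔭 − T_𝔭|. The map β ↦ σ̄β := σ^{n_β}β is a permutation of 𝔹_𝔭 − T_𝔭; for 1 ≤ i ≤ s let n_i(τ) be the unique integer with 0 < n_i(τ) ≤ |𝔹_𝔭| and σ̄^iτ = σ^{n_i(τ)}τ. Then for every κ ∈ ℚ^𝔹, writing i_T(κ) = Σ_{β ∈ 𝔹−T} ℓ_β e_β, one has p^{n₁(τ)}·L_{T,τ}(κ) = Σ_{i=1}^{s} p^{n_i(τ)}·ℓ_{σ̄^iτ}. -/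
/- Setting: `B` is the finite nonempty set 𝔹 equipped with a permutation `σ` (Frobenius),
and `p` is a prime.  Weights live in `ℚ^𝔹 = (B → ℚ)`.  The orbits `𝔹_𝔭` of `σ` are the sets
`orbit σ β`, and for `T ⊆ 𝔹` we have `T_𝔭 = T ∩ orbit σ β`. -/

open scoped Classical

noncomputable section

namespace GO

variable {B : Type*} [Fintype B] [DecidableEq B]

/-- The standard basis vector `e_β` of `ℚ^𝔹`. -/
def e (β : B) : B → ℚ := fun τ => if τ = β then 1 else 0

/-- `β'` lies in the `σ`-orbit of `β`. -/
def sameOrbit (σ : Equiv.Perm B) (β β' : B) : Prop := ∃ n : ℕ, (σ ^ n) β = β'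

/-- The `σ`-orbit `𝔹_𝔭` of `β`. -/
def orbit (σ : Equiv.Perm B) (β : B) : Set B := {τ | sameOrbit σ β τ}

/-- `|𝔹_𝔭|`, the cardinality of the orbit of `β`. -/
def orbitCard (σ : Equiv.Perm B) (β : B) : ℕ := (orbit σ β).ncard

/-- For `β`, `β'` in the same orbit: the unique `n` with `0 < n ≤ |𝔹_𝔭|` and `σ^n β' = β`,
realized as the least positive `n` with `σ^n β' = β`. -/
def steps (σ : Equiv.Perm B) (β' β : B) : ℕ := sInf {n : ℕ | 0 < n ∧ (σ ^ n) β' = β}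

/-- For `β`, `β'` in the same orbit: the unique `n` with `0 ≤ n < |𝔹_𝔭|` and `σ^n β = β'`. -/
def steps0 (σ : Equiv.Perm B) (β β' : B) : ℕ := sInf {n : ℕ | (σ ^ n) β = β'}

/-- `h_β^{β'} = -e_β + p^n e_{β'}` where `β = σ^n β'` with `0 < n ≤ |𝔹_𝔭|`. -/
def hvec (σ : Equiv.Perm B) (p : ℕ) (β β' : B) : B → ℚ :=
  -(e β) + ((p : ℚ) ^ steps σ β' β) • e β'

/-- `b_β^{β'} = e_β + p^n e_{β'}` where `β = σ^n β'` with `0 < n ≤ |𝔹_𝔭|`. -/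
def bvec (σ : Equiv.Perm B) (p : ℕ) (β β' : B) : B → ℚ :=
  (e β) + ((p : ℚ) ^ steps σ β' β) • e β'

/-- `h_β = -e_β + p e_{σ⁻¹ β}`. -/
def hsimple (σ : Equiv.Perm B) (p : ℕ) (β : B) : B → ℚ := -(e β) + (p : ℚ) • e (σ⁻¹ β)

/-- `b_β = e_β + p e_{σ⁻¹ β}`. -/
def bsimple (σ : Equiv.Perm B) (p : ℕ) (β : B) : B → ℚ := (e β) + (p : ℚ) • e (σ⁻¹ β)

/-- The `ℚ^{≥0}`-cone generated by a set `S` of vectors: all finite nonnegative rational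
linear combinations of elements of `S`. -/
def cone {V : Type*} [AddCommMonoid V] [Module ℚ V] (S : Set V) : Set V :=
  {x | ∃ (n : ℕ) (c : Fin n → ℚ) (v : Fin n → V),
    (∀ i, 0 ≤ c i) ∧ (∀ i, v i ∈ S) ∧ x = ∑ i, c i • v i}

/-- A chain in `T` (automatically contained in a single orbit, so this is the notion of a
chain in `T_𝔭` for `T_𝔭 ⊊ 𝔹_𝔭`): `C = {σ^{-i}β : 0 ≤ i ≤ m} ⊆ T` with `σβ ∉ T` and
`σ^{-m-1}β ∉ T`. -/
def IsChainIn (σ : Equiv.Perm B) (T : Set B) (C : Set B) : Prop :=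
  ∃ (β : B) (m : ℕ), σ β ∉ T ∧ (σ⁻¹ ^ (m + 1)) β ∉ T ∧
    (∀ i ≤ m, (σ⁻¹ ^ i) β ∈ T) ∧ C = {τ | ∃ i ≤ m, τ = (σ⁻¹ ^ i) β}

/-- `C̃` for a chain `C`: equals `C` if `m` is odd (i.e. `|C| = m+1` is even), and
`C ∪ {σ^{-m-1}β} = C ∪ σ⁻¹(C)` if `m` is even (i.e. `|C|` odd). -/
def chainExt (σ : Equiv.Perm B) (C : Set B) : Set B :=
  if Odd C.ncard then C ∪ (⇑σ⁻¹ '' C) else C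

/-- `T̃ = ⋃_𝔭 T̃_𝔭`: the union of `T` with the extensions `C̃` of all chains `C` in `T`.
(For orbits with `T_𝔭 = 𝔹_𝔭` there are no chains and `T̃_𝔭 = 𝔹_𝔭 = T_𝔭`.) -/
def tilde (σ : Equiv.Perm B) (T : Set B) : Set B :=
  T ∪ ⋃ (C : Set B) (_ : IsChainIn σ T C), chainExt σ C

/-- `μ_β`: the least `i > 0` with `σ^i β ∉ T` if `T_𝔭 ≠ 𝔹_𝔭`, and `0` if `T_𝔭 = 𝔹_𝔭`. -/
def mu (σ : Equiv.Perm B) (T : Set B) (β : B) : ℕ :=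
  if orbit σ β ⊆ T then 0 else sInf {i : ℕ | 0 < i ∧ (σ ^ i) β ∉ T}

/-- `n_β`: the least `i > 0` with `σ^i β ∉ T̃` (meaningful when `T̃_𝔭 ≠ 𝔹_𝔭`). -/
def nn (σ : Equiv.Perm B) (T : Set B) (β : B) : ℕ :=
  sInf {i : ℕ | 0 < i ∧ (σ ^ i) β ∉ tilde σ T}

/-- `ν_β`: the least `i ≥ 0` with `σ^{-i} β ∉ T` (meaningful when `T_𝔭 ≠ 𝔹_𝔭`). -/
def nu (σ : Equiv.Perm B) (T : Set B) (β : B) : ℕ :=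
  sInf {i : ℕ | (σ⁻¹ ^ i) β ∉ T}

/-- `𝒯(T_𝔭) = (𝔹_𝔭 − T̃_𝔭) ∪ σ(T̃_𝔭 − T_𝔭)`, taken globally (union over all `𝔭`). -/
def Tscr (σ : Equiv.Perm B) (T : Set B) : Set B :=
  (tilde σ T)ᶜ ∪ (⇑σ '' (tilde σ T \ T))

/-- The generating set `⋃_𝔭 𝒢(T_𝔭)`:
`{h_β^{β'} : β ∈ ℋ(T_𝔭), β' ∈ 𝒯(T_𝔭)} ∪ {±b_β : β ∈ T_𝔭}` over all `𝔭`. -/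
def Dgen (σ : Equiv.Perm B) (p : ℕ) (T : Set B) : Set (B → ℚ) :=
  {v | ∃ β β', β ∉ T ∧ β' ∈ Tscr σ T ∧ sameOrbit σ β β' ∧ v = hvec σ p β β'}
  ∪ {v | ∃ β ∈ T, v = bsimple σ p β ∨ v = -(bsimple σ p β)}

/-- The cone `𝒟_T`. -/
def D (σ : Equiv.Perm B) (p : ℕ) (T : Set B) : Set (B → ℚ) := cone (Dgen σ p T)

/-- `h_{σ^{n_β}β}^{β} = -e_{σ^{n_β}β} + p^{n_β} e_β`. -/
def fH (σ : Equiv.Perm B) (p : ℕ) (T : Set B) (β : B) : B → ℚ :=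
  -(e ((σ ^ nn σ T β) β)) + ((p : ℚ) ^ nn σ T β) • e β

/-- `b_{σ^{n_β}β}^{β} = e_{σ^{n_β}β} + p^{n_β} e_β`. -/
def fB (σ : Equiv.Perm B) (p : ℕ) (T : Set B) (β : B) : B → ℚ :=
  (e ((σ ^ nn σ T β) β)) + ((p : ℚ) ^ nn σ T β) • e β

/-- The generating set `⋃_𝔭 𝒢′(T_𝔭)`:
if `𝔹_𝔭 − T̃_𝔭 ≠ ∅` it is `{h_{σ^{n_β}β}^β : β ∈ 𝔹_𝔭 − T̃_𝔭} ∪ {−b_{σ^{n_β}β}^β : β ∈ T̃_𝔭 − T_𝔭}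
∪ {±b_β : β ∈ T_𝔭}`, and if `𝔹_𝔭 = T̃_𝔭` it is `{−e_β : β ∈ 𝔹_𝔭 − T_𝔭} ∪ {±b_β : β ∈ T_𝔭}`. -/
def D'gen (σ : Equiv.Perm B) (p : ℕ) (T : Set B) : Set (B → ℚ) :=
  {v | ∃ β, β ∉ tilde σ T ∧ v = fH σ p T β}
  ∪ {v | ∃ β, β ∈ tilde σ T ∧ β ∉ T ∧ ¬ orbit σ β ⊆ tilde σ T ∧ v = -(fB σ p T β)}
  ∪ {v | ∃ β, β ∉ T ∧ orbit σ β ⊆ tilde σ T ∧ v = -(e β)}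
  ∪ {v | ∃ β ∈ T, v = bsimple σ p β ∨ v = -(bsimple σ p β)}

/-- The cone `𝒟′_T`. -/
def D' (σ : Equiv.Perm B) (p : ℕ) (T : Set B) : Set (B → ℚ) := cone (D'gen σ p T)

/-- `f_β(T)` for `β ∉ T`: `h_{σ^{n_β}β}^β` if `β ∈ 𝔹_𝔭 − T̃_𝔭`; `−b_{σ^{n_β}β}^β` if
`β ∈ T̃_𝔭 − T_𝔭` and `𝔹_𝔭 ≠ T̃_𝔭`; and `−(1+p^{|𝔹_𝔭|}) e_β` if `𝔹_𝔭 = T̃_𝔭`. -/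
def fvec (σ : Equiv.Perm B) (p : ℕ) (T : Set B) (β : B) : B → ℚ :=
  if orbit σ β ⊆ tilde σ T then -((1 + (p : ℚ) ^ orbitCard σ β) • e β)
  else if β ∈ tilde σ T then -(fB σ p T β) else fH σ p T β

/-- `𝔹(T) = ⋃_𝔭 𝔹_𝔭(T)`: `β ∈ 𝔹(T)` iff `β ∉ T`, the set `𝔹_𝔭 − T̃_𝔭` is nonempty, and
`𝔹_𝔭 − T̃_𝔭 ≠ {β}` (this encodes all three cases of the definition of `𝔹_𝔭(T)`). -/
def BT (σ : Equiv.Perm B) (T : Set B) : Set B :=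
  {β | β ∉ T ∧ (orbit σ β \ tilde σ T).Nonempty ∧ orbit σ β \ tilde σ T ≠ {β}}

/-- The sign function `ε_T : 𝔹 → {−1,0,1}`. -/
def epsT (σ : Equiv.Perm B) (T : Set B) (β : B) : ℚ :=
  if orbit σ β ⊆ T then 0
  else if β ∈ tilde σ T then (-1 : ℚ) ^ (mu σ T β - 1) else 1

/-- `L^ε[β, β'](κ) = Σ_{0 ≤ i ≤ n} ε(σ^iβ) p^i k_{σ^iβ}`, where `β' = σ^n β` with
`0 ≤ n < |𝔹_𝔭|`. -/
def Lfun (σ : Equiv.Perm B) (p : ℕ) (ε : B → ℚ) (β β' : B) (κ : B → ℚ) : ℚ :=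
  ∑ i ∈ Finset.range (steps0 σ β β' + 1), ε ((σ ^ i) β) * (p : ℚ) ^ i * κ ((σ ^ i) β)

/-- `L^ε[β] = L^ε[β, σ⁻¹β]`. -/
def Lfun1 (σ : Equiv.Perm B) (p : ℕ) (ε : B → ℚ) (β : B) (κ : B → ℚ) : ℚ :=
  Lfun σ p ε β (σ⁻¹ β) κ

/-- `L_{T,β}` for `β ∈ 𝔹 − T`: `L^{ε_T}[σ^{μ_β}β]` if `β ∈ 𝔹 − T̃`, and
`L^{ε_T}[β, σ^{μ_β−1}β]` if `β ∈ T̃ − T`. -/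
def LT (σ : Equiv.Perm B) (p : ℕ) (T : Set B) (β : B) (κ : B → ℚ) : ℚ :=
  if β ∈ tilde σ T then Lfun σ p (epsT σ T) β ((σ ^ (mu σ T β - 1)) β) κ
  else Lfun1 σ p (epsT σ T) ((σ ^ mu σ T β) β) κ

/-- `ε_{T,f_β}`: negates `ε_T` on `{β, σβ, …, σ^{μ_β−1}β}`. -/
def epsTf (σ : Equiv.Perm B) (T : Set B) (β τ : B) : ℚ :=
  if ∃ i < mu σ T β, τ = (σ ^ i) β then -(epsT σ T τ) else epsT σ T τ

/-- `L_{T,f_β,τ}` for `β ∈ 𝔹(T)` and `τ ∈ 𝔹 − (T ∪ {σ^{n_β}β})`, with `β′ = σ^{n_β}β` and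
`β̃ = σ^{μ_{β′}}β′`. -/
def LTf (σ : Equiv.Perm B) (p : ℕ) (T : Set B) (β τ : B) (κ : B → ℚ) : ℚ :=
  if τ = β then
    (if β ∈ tilde σ T then
      Lfun1 σ p (epsTf σ T β) ((σ ^ mu σ T ((σ ^ nn σ T β) β)) ((σ ^ nn σ T β) β)) κ
    else
      Lfun σ p (epsTf σ T β) β (σ⁻¹ ((σ ^ mu σ T ((σ ^ nn σ T β) β)) ((σ ^ nn σ T β) β))) κ)
  else
    (if τ ∈ tilde σ T then LT σ p T τ κ
     else Lfun1 σ p (epsTf σ T β) ((σ ^ mu σ T τ) τ) κ)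

/-- `𝒟_{T,f_β} = {κ : L_{T,f_β,τ}(κ) ≥ 0 for all τ ∈ 𝔹 − (T ∪ {σ^{n_β}β})}`. -/
def Df (σ : Equiv.Perm B) (p : ℕ) (T : Set B) (β : B) : Set (B → ℚ) :=
  {κ | ∀ τ, τ ∉ T → τ ≠ (σ ^ nn σ T β) β → 0 ≤ LTf σ p T β τ κ}

/-- `i_T : ℚ^𝔹 → ℚ^{𝔹−T}`, the linear map with `i_T(e_β) = 0` if `T_𝔭 = 𝔹_𝔭` and
`i_T(e_β) = (−p)^{ν_β} e_{σ^{−ν_β}β}` otherwise. -/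
def iT (σ : Equiv.Perm B) (p : ℕ) (T : Set B) (κ : B → ℚ) : {β : B // β ∉ T} → ℚ :=
  fun β₀ => ∑ β : B, κ β *
    (if orbit σ β ⊆ T then 0
     else if (σ⁻¹ ^ nu σ T β) β = β₀.1 then (-(p : ℚ)) ^ nu σ T β else 0)

/-- Restriction to `ℚ^{𝔹−T}` of a vector of `ℚ^𝔹` (used for vectors supported on `𝔹 − T`). -/
def res (T : Set B) (v : B → ℚ) : {β : B // β ∉ T} → ℚ := fun β => v β.1

/-- The generating set `𝒢^{T-red}(T) = ⋃_𝔭 𝒢_𝔭^{T-red}(T)` of the reduced cone. -/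
def Gred (σ : Equiv.Perm B) (p : ℕ) (T : Set B) : Set ({β : B // β ∉ T} → ℚ) :=
  {v | ∃ β, β ∉ tilde σ T ∧ v = res T (fH σ p T β)}
  ∪ {v | ∃ β, β ∈ tilde σ T ∧ β ∉ T ∧ ¬ orbit σ β ⊆ tilde σ T ∧ v = res T (-(fB σ p T β))}
  ∪ {v | ∃ β, β ∉ T ∧ orbit σ β ⊆ tilde σ T ∧ v = res T (-(e β))}

/-- The minimal cone `𝒞^min_T = i_T(𝒟_T ∩ ⋂_{β ∈ 𝔹(T)} 𝒟_{T,f_β}) ⊆ ℚ^{𝔹−T}`. -/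
def Cmin (σ : Equiv.Perm B) (p : ℕ) (T : Set B) : Set ({β : B // β ∉ T} → ℚ) :=
  iT σ p T '' (D σ p T ∩ {κ | ∀ β ∈ BT σ T, κ ∈ Df σ p T β})

/-- `g_β`: `b_β` if `β ∈ T_𝔭`; `−e_β` if `β ∈ T̃_𝔭 − T_𝔭` and `𝔹_𝔭 = T̃_𝔭`;
`−b_{σ^{n_β}β}^β` if `β ∈ T̃_𝔭 − T_𝔭` and `𝔹_𝔭 ≠ T̃_𝔭`; `h_{σ^{n_β}β}^β` if `β ∈ 𝔹_𝔭 − T̃_𝔭`. -/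
def gvec (σ : Equiv.Perm B) (p : ℕ) (T : Set B) (β : B) : B → ℚ :=
  if β ∈ T then bsimple σ p β
  else if orbit σ β ⊆ tilde σ T then -(e β)
  else if β ∈ tilde σ T then -(fB σ p T β)
  else fH σ p T β

/-- The map `σ̄ : β ↦ σ^{n_β} β`. -/
def sigbar (σ : Equiv.Perm B) (T : Set B) (β : B) : B := (σ ^ nn σ T β) β

/-- `h_β = -e_β + p e_{σ⁻¹β}` as an element of `ℤ^𝔹`. -/
def hZ (σ : Equiv.Perm B) (p : ℕ) (β : B) : B → ℤ :=
  fun τ => (if τ = β then -1 else 0) + (if τ = σ⁻¹ β then (p : ℤ) else 0)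

end GO

end

namespace GO

section helpers

variable {B : Type*} [Fintype B] [DecidableEq B]

theorem aux_period_pos (σ : Equiv.Perm B) (τ : B) : 0 < Function.minimalPeriod σ τ :=
  Function.minimalPeriod_pos_of_mem_periodicPts
    ((Function.Injective.mem_periodicPts σ.injective) τ)

theorem aux_dvd (σ : Equiv.Perm B) (τ x : B) (hx : x ∈ orbit σ τ) (n : ℕ) :
    (σ ^ n) x = x ↔ Function.minimalPeriod σ τ ∣ n := by
  obtain ⟨k, rfl⟩ := hx
  rw [← Function.isPeriodicPt_iff_minimalPeriod_dvd, Function.IsPeriodicPt, Function.IsFixedPt,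
    Equiv.Perm.iterate_eq_pow, ← Equiv.Perm.mul_apply, ← pow_add, add_comm, pow_add,
    Equiv.Perm.mul_apply, EmbeddingLike.apply_eq_iff_eq]

theorem aux_orbit_trans (σ : Equiv.Perm B) {x y z : B} (h1 : y ∈ orbit σ x)
    (h2 : z ∈ orbit σ y) : z ∈ orbit σ x := by
  obtain ⟨a, rfl⟩ := h1
  obtain ⟨b, rfl⟩ := h2
  exact ⟨b + a, by rw [pow_add, Equiv.Perm.mul_apply]⟩

theorem aux_orbit_pow (σ : Equiv.Perm B) (x : B) (n : ℕ) : (σ ^ n) x ∈ orbit σ x := ⟨n, rfl⟩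

theorem aux_orbit_symm (σ : Equiv.Perm B) {x y : B} (h1 : y ∈ orbit σ x) : x ∈ orbit σ y := by
  obtain ⟨a, rfl⟩ := h1
  have hM := aux_period_pos σ x
  refine ⟨a * (Function.minimalPeriod σ x - 1), ?_⟩
  rw [← Equiv.Perm.mul_apply, ← pow_add]
  rw [aux_dvd σ x x ⟨0, rfl⟩]
  refine ⟨a, ?_⟩
  obtain ⟨m, hm⟩ := Nat.exists_eq_succ_of_ne_zero hM.ne'
  rw [hm]; simp; ring

theorem aux_inv_pow (σ : Equiv.Perm B) (n i : ℕ) (h : i ≤ n) (x : B) :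
    (σ⁻¹ ^ i) ((σ ^ n) x) = (σ ^ (n - i)) x := by
  obtain ⟨k, rfl⟩ := Nat.exists_eq_add_of_le h
  rw [pow_add, Equiv.Perm.mul_apply, inv_pow]
  simp

theorem aux_inv_pow' (σ : Equiv.Perm B) (n i : ℕ) (h : n ≤ i) (x : B) :
    (σ⁻¹ ^ i) ((σ ^ n) x) = (σ⁻¹ ^ (i - n)) x := by
  obtain ⟨k, rfl⟩ := Nat.exists_eq_add_of_le h
  rw [add_comm n k, pow_add, Equiv.Perm.mul_apply, inv_pow σ n]
  simp

theorem aux_inv_orbit (σ : Equiv.Perm B) (x : B) (n : ℕ) : (σ⁻¹ ^ n) x ∈ orbit σ x := by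
  apply aux_orbit_symm
  exact ⟨n, by rw [inv_pow]; exact Equiv.apply_symm_apply _ _⟩

theorem aux_even (σ : Equiv.Perm B) (T : Set B) (hT : tilde σ T = T) (β : B) (m : ℕ)
    (h1 : σ β ∉ T) (h2 : (σ⁻¹ ^ (m + 1)) β ∉ T) (h3 : ∀ i ≤ m, (σ⁻¹ ^ i) β ∈ T) :
    Even (m + 1) := by
  by_contra hodd
  rw [Nat.not_even_iff_odd] at hodd
  set C : Set B := {τ | ∃ i ≤ m, τ = (σ⁻¹ ^ i) β} with hC
  have hch : IsChainIn σ T C := ⟨β, m, h1, h2, h3, rfl⟩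
  have hinj : Set.InjOn (fun i : ℕ => (σ⁻¹ ^ i) β) (Finset.range (m + 1)) := by
    have key : ∀ i j, i < j → j ≤ m → (σ⁻¹ ^ i) β ≠ (σ⁻¹ ^ j) β := by
      intro i j hij hj he
      apply h2
      have : (σ⁻¹ ^ (m + 1)) β = (σ⁻¹ ^ (m + 1 - j + i)) β := by
        rw [pow_add _ (m + 1 - j) i, Equiv.Perm.mul_apply, he, ← Equiv.Perm.mul_apply, ← pow_add]
        congr 2; omega
      rw [this]
      exact h3 _ (by omega)
    intro i hi j hj he
    simp at hi hj
    rcases lt_trichotomy i j with h | h | h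
    · exact absurd he (key i j h (by omega))
    · exact h
    · exact absurd he.symm (key j i h (by omega))
  have hcard : C.ncard = m + 1 := by
    have : C = ((Finset.range (m + 1)).image (fun i : ℕ => (σ⁻¹ ^ i) β) : Finset B) := by
      ext x; simp [hC, Nat.lt_succ_iff, eq_comm]
    rw [this, Set.ncard_coe_finset, Finset.card_image_of_injOn hinj, Finset.card_range]
  apply h2
  rw [← hT]
  right
  simp only [Set.mem_iUnion]
  refine ⟨C, hch, ?_⟩
  rw [chainExt, hcard, if_pos hodd]
  right
  exact ⟨(σ⁻¹ ^ m) β, ⟨m, le_rfl, rfl⟩, by rw [pow_succ', Equiv.Perm.mul_apply]⟩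

theorem aux_nu (σ : Equiv.Perm B) (T : Set B) (γ τ : B) (hτ : τ ∉ T) (h : γ ∈ orbit σ τ) :
    (σ⁻¹ ^ nu σ T γ) γ ∉ T ∧ ∀ i < nu σ T γ, (σ⁻¹ ^ i) γ ∈ T := by
  have hne : {i : ℕ | (σ⁻¹ ^ i) γ ∉ T}.Nonempty := by
    obtain ⟨n, rfl⟩ := h
    exact ⟨n, by simpa [aux_inv_pow] using hτ⟩
  refine ⟨Nat.sInf_mem hne, fun i hi => ?_⟩
  by_contra hc
  exact Nat.notMem_of_lt_sInf hi hc

theorem aux_nn (σ : Equiv.Perm B) (T : Set B) (hT : tilde σ T = T) (γ τ : B)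
    (hτ : τ ∉ T) (h : γ ∈ orbit σ τ) :
    0 < nn σ T γ ∧ (σ ^ nn σ T γ) γ ∉ T ∧ ∀ i < nn σ T γ, 0 < i → (σ ^ i) γ ∈ T := by
  have hne : {i : ℕ | 0 < i ∧ (σ ^ i) γ ∉ tilde σ T}.Nonempty := by
    obtain ⟨n, hn⟩ := aux_orbit_symm σ h
    refine ⟨n + Function.minimalPeriod σ τ, by have := aux_period_pos σ τ; omega, ?_⟩
    rw [pow_add, Equiv.Perm.mul_apply, (aux_dvd σ τ γ h _).2 dvd_rfl, hn, hT]
    exact hτ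
  have h1 : 0 < nn σ T γ ∧ (σ ^ nn σ T γ) γ ∉ tilde σ T := Nat.sInf_mem hne
  have h2 : (σ ^ nn σ T γ) γ ∉ T := fun hc => h1.2 (hT.symm.subset hc)
  refine ⟨h1.1, h2, fun i hi h0 => ?_⟩
  by_contra hc
  exact Nat.notMem_of_lt_sInf hi ⟨h0, by rwa [hT]⟩

theorem aux_not_sub (σ : Equiv.Perm B) (T : Set B) (γ τ : B)
    (hτ : τ ∉ T) (h : γ ∈ orbit σ τ) : ¬ orbit σ γ ⊆ T :=
  fun hs => hτ (hs (aux_orbit_symm σ h))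

theorem aux_mu (σ : Equiv.Perm B) (T : Set B) (hT : tilde σ T = T) (γ τ : B)
    (hτ : τ ∉ T) (h : γ ∈ orbit σ τ) : mu σ T γ = nn σ T γ := by
  rw [mu, if_neg (aux_not_sub σ T γ τ hτ h), nn, hT]

theorem aux_sign (σ : Equiv.Perm B) (T : Set B) (hT : tilde σ T = T) (γ τ : B)
    (hτ : τ ∉ T) (h : γ ∈ orbit σ τ) : epsT σ T γ = (-1) ^ nu σ T γ := by
  rw [epsT, if_neg (aux_not_sub σ T γ τ hτ h), hT]
  obtain ⟨n1, n2⟩ := aux_nu σ T γ τ hτ h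
  obtain ⟨m0, m1, m2⟩ := aux_nn σ T hT γ τ hτ h
  rw [aux_mu σ T hT γ τ hτ h]
  generalize nu σ T γ = v at *
  generalize nn σ T γ = u at *
  split_ifs with hγ
  · have hv : v ≠ 0 := by
      rintro rfl
      exact n1 (by simpa using hγ)
    have hE := aux_even σ T hT ((σ ^ (u - 1)) γ) (u - 1 + (v - 1)) ?_ ?_ ?_
    · have : Even (u - 1 + v) := by convert hE using 1; omega
      rw [neg_one_pow_congr]
      exact Nat.even_add.1 this
    · rw [← Equiv.Perm.mul_apply, ← pow_succ']
      convert m1 using 4; omega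
    · rw [aux_inv_pow' _ _ _ (by omega)]
      convert n1 using 4; omega
    · intro i hi
      rcases le_total i (u - 1) with hl | hl
      · rw [aux_inv_pow _ _ _ hl]
        rcases Nat.eq_zero_or_pos (u - 1 - i) with h0 | h0
        · rw [h0]; simpa using hγ
        · exact m2 _ (by omega) h0
      · rw [aux_inv_pow' _ _ _ hl]
        exact n2 _ (by omega)
  · have hv : v = 0 := by
      by_contra hv
      exact hγ (by simpa using n2 0 (by omega))
    simp [hv]

theorem aux_steps (σ : Equiv.Perm B) (τ δ : B) (h : δ ∈ orbit σ τ) :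
    0 < steps σ τ δ ∧ (σ ^ steps σ τ δ) τ = δ ∧ steps σ τ δ ≤ Function.minimalPeriod σ τ := by
  have hM := aux_period_pos σ τ
  obtain ⟨n, rfl⟩ := h
  set M := Function.minimalPeriod σ τ with hMd
  have hmod : (σ ^ (n % M)) τ = (σ ^ n) τ := by
    rw [← Equiv.Perm.iterate_eq_pow, ← Equiv.Perm.iterate_eq_pow]
    exact Function.iterate_mod_minimalPeriod_eq
  have hlt := Nat.mod_lt n hM
  have hex : ∃ k, 0 < k ∧ k ≤ M ∧ (σ ^ k) τ = (σ ^ n) τ := by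
    rcases Nat.eq_zero_or_pos (n % M) with h0 | h0
    · refine ⟨M, hM, le_rfl, ?_⟩
      rw [← hmod, h0, (aux_dvd σ τ τ ⟨0, rfl⟩ _).2 dvd_rfl]; rfl
    · exact ⟨_, h0, hlt.le, hmod⟩
  obtain ⟨k, k0, k1, k2⟩ := hex
  have hmem : k ∈ {m : ℕ | 0 < m ∧ (σ ^ m) τ = (σ ^ n) τ} := ⟨k0, k2⟩
  have := Nat.sInf_mem ⟨k, hmem⟩
  exact ⟨this.1, this.2, (Nat.sInf_le hmem).trans k1⟩

theorem aux_steps_sigbar (σ : Equiv.Perm B) (T : Set B) (hT : tilde σ T = T) (τ : B)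
    (hτ : τ ∉ T) : steps σ τ (sigbar σ T τ) = nn σ T τ := by
  obtain ⟨m0, m1, m2⟩ := aux_nn σ T hT τ τ hτ ⟨0, rfl⟩
  obtain ⟨s0, s1, -⟩ := aux_steps σ τ (sigbar σ T τ) ⟨_, rfl⟩
  apply le_antisymm
  · exact Nat.sInf_le ⟨m0, rfl⟩
  · by_contra hlt
    push Not at hlt
    apply m1
    have := m2 _ hlt s0
    rwa [s1] at this

theorem aux_steps0_pow (σ : Equiv.Perm B) (τ x : B) (hx : x ∈ orbit σ τ) (i : ℕ)
    (hi : i < Function.minimalPeriod σ τ) : steps0 σ x ((σ ^ i) x) = i := by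
  have hne : {n : ℕ | (σ ^ n) x = (σ ^ i) x}.Nonempty := ⟨i, rfl⟩
  have h1 : (σ ^ steps0 σ x ((σ ^ i) x)) x = (σ ^ i) x := Nat.sInf_mem hne
  have h2 : steps0 σ x ((σ ^ i) x) ≤ i := Nat.sInf_le rfl
  obtain ⟨k, hk⟩ := Nat.exists_eq_add_of_le h2
  generalize steps0 σ x ((σ ^ i) x) = a at *
  subst hk
  rw [pow_add, Equiv.Perm.mul_apply, EmbeddingLike.apply_eq_iff_eq, eq_comm,
    aux_dvd σ τ x hx] at h1
  rcases Nat.eq_zero_or_pos k with h0 | h0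
  · omega
  · have := Nat.le_of_dvd h0 h1
    omega

theorem aux_expo (σ : Equiv.Perm B) (T : Set B) (hT : tilde σ T = T) (τ γ : B)
    (hτ : τ ∉ T) (h : γ ∈ orbit σ τ) :
    nn σ T τ + steps0 σ (sigbar σ T τ) γ = nu σ T γ + steps σ τ ((σ⁻¹ ^ nu σ T γ) γ) := by
  obtain ⟨n1, n2⟩ := aux_nu σ T γ τ hτ h
  obtain ⟨m0, m1, m2⟩ := aux_nn σ T hT τ τ hτ ⟨0, rfl⟩
  obtain ⟨s0, s1, s2⟩ := aux_steps σ τ ((σ⁻¹ ^ nu σ T γ) γ)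
    (aux_orbit_trans σ h (aux_inv_orbit σ γ _))
  have hγ : γ = (σ ^ (nu σ T γ + steps σ τ ((σ⁻¹ ^ nu σ T γ) γ))) τ := by
    rw [pow_add, Equiv.Perm.mul_apply, s1, inv_pow]
    exact (Equiv.apply_symm_apply _ _).symm
  have hk : nn σ T τ ≤ steps σ τ ((σ⁻¹ ^ nu σ T γ) γ) := by
    by_contra hlt
    push Not at hlt
    apply n1
    have := m2 _ hlt s0
    rwa [s1] at this
  generalize steps σ τ ((σ⁻¹ ^ nu σ T γ) γ) = k at *
  generalize nu σ T γ = v at *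
  have hγ2 : γ = (σ ^ (v + k - nn σ T τ)) (sigbar σ T τ) := by
    rw [sigbar, ← Equiv.Perm.mul_apply, ← pow_add, hγ]
    congr 2; omega
  have hlt : v + k - nn σ T τ < Function.minimalPeriod σ τ := by
    by_contra hge
    push Not at hge
    apply m1
    have := n2 (v - (nn σ T τ + (Function.minimalPeriod σ τ - k))) (by omega)
    rw [hγ, aux_inv_pow _ _ _ (by omega)] at this
    rw [show v + k - (v - (nn σ T τ + (Function.minimalPeriod σ τ - k))) =
      nn σ T τ + Function.minimalPeriod σ τ by omega, pow_add, Equiv.Perm.mul_apply,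
      (aux_dvd σ τ τ ⟨0, rfl⟩ _).2 dvd_rfl] at this
    exact this
  have := aux_steps0_pow σ τ (sigbar σ T τ) ⟨_, rfl⟩ _ hlt
  rw [← hγ2] at this
  omega

theorem aux_Lfun1 (σ : Equiv.Perm B) (p : ℕ) (ε : B → ℚ) (τ x : B) (hx : x ∈ orbit σ τ)
    (κ : B → ℚ) : Lfun1 σ p ε x κ =
      ∑ γ ∈ (orbit σ τ).toFinset, ε γ * (p : ℚ) ^ steps0 σ x γ * κ γ := by
  have hM := aux_period_pos σ τ
  have hinv : σ⁻¹ x = (σ ^ (Function.minimalPeriod σ τ - 1)) x := by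
    rw [Equiv.Perm.inv_eq_iff_eq, ← Equiv.Perm.mul_apply, ← pow_succ', Nat.sub_add_cancel hM,
      (aux_dvd σ τ x hx _).2 dvd_rfl]
  have hst : steps0 σ x (σ⁻¹ x) + 1 = Function.minimalPeriod σ τ := by
    rw [hinv, aux_steps0_pow σ τ x hx _ (by omega)]; omega
  rw [Lfun1, Lfun, hst]
  refine Finset.sum_bij (fun i _ => (σ ^ i) x) ?_ ?_ ?_ ?_
  · intro i _
    simpa using aux_orbit_trans σ hx ⟨i, rfl⟩
  · intro i hi j hj he
    simp only [Finset.mem_range] at hi hj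
    have h1 := aux_steps0_pow σ τ x hx i hi
    have h2 := aux_steps0_pow σ τ x hx j hj
    rw [he] at h1
    omega
  · intro γ hγ
    simp only [Set.mem_toFinset] at hγ
    obtain ⟨n, rfl⟩ := aux_orbit_trans σ (aux_orbit_symm σ hx) hγ
    refine ⟨n % Function.minimalPeriod σ τ, by simpa using Nat.mod_lt _ hM, ?_⟩
    conv_rhs => rw [← Nat.mod_add_div n (Function.minimalPeriod σ τ), pow_add,
      Equiv.Perm.mul_apply, (aux_dvd σ τ x hx _).2 ⟨_, rfl⟩]
  · intro i hi
    simp only [Finset.mem_range] at hi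
    rw [aux_steps0_pow σ τ x hx i hi]

theorem aux_maps (σ : Equiv.Perm B) (T : Set B) (hT : tilde σ T = T) (τ : B)
    (hτ : τ ∉ T) : Set.MapsTo (sigbar σ T) (orbit σ τ \ T) (orbit σ τ \ T) := by
  rintro x ⟨hx, hxT⟩
  exact ⟨aux_orbit_trans σ hx ⟨_, rfl⟩, (aux_nn σ T hT x τ hτ hx).2.1⟩

theorem aux_trans (σ : Equiv.Perm B) (T : Set B) (hT : tilde σ T = T) (δ : B) (hδ : δ ∉ T)
    (k : ℕ) : ∀ β, β ∉ T → 0 < k → (σ ^ k) β = δ → ∃ i, 0 < i ∧ (sigbar σ T)^[i] β = δ := by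
  induction k using Nat.strong_induction_on with
  | _ k ih =>
    intro β hβ hk he
    obtain ⟨m0, m1, m2⟩ := aux_nn σ T hT β β hβ ⟨0, rfl⟩
    have hle : nn σ T β ≤ k := by
      by_contra hlt
      push Not at hlt
      exact hδ (he ▸ m2 k hlt hk)
    rcases hle.eq_or_lt with h | h
    · exact ⟨1, one_pos, by rw [← he, ← h]; rfl⟩
    · obtain ⟨i, i0, hi⟩ := ih (k - nn σ T β) (by omega) (sigbar σ T β) m1 (by omega) (by
        rw [sigbar, ← Equiv.Perm.mul_apply, ← pow_add, Nat.sub_add_cancel hle, he])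
      exact ⟨i + 1, by omega, by rw [Function.iterate_succ_apply, hi]⟩

theorem aux_reach (σ : Equiv.Perm B) (T : Set B) (hT : tilde σ T = T) (τ δ : B) (hτ : τ ∉ T)
    (hδ : δ ∈ orbit σ τ \ T) : ∃ i, 0 < i ∧ (sigbar σ T)^[i] τ = δ := by
  obtain ⟨s0, s1, -⟩ := aux_steps σ τ δ hδ.1
  exact aux_trans σ T hT δ hδ.2 _ τ hτ s0 s1

theorem aux_bij (σ : Equiv.Perm B) (T : Set B) (hT : tilde σ T = T) (τ : B) (hτ : τ ∉ T) :
    Set.BijOn (sigbar σ T) (orbit σ τ \ T) (orbit σ τ \ T) := by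
  have hm := aux_maps σ T hT τ hτ
  refine (Set.Finite.surjOn_iff_bijOn_of_mapsTo (Set.toFinite _) hm).1 ?_
  intro δ hδ
  obtain ⟨i, i0, hi⟩ := aux_reach σ T hT τ δ hτ hδ
  obtain ⟨j, rfl⟩ := Nat.exists_eq_succ_of_ne_zero i0.ne'
  refine ⟨(sigbar σ T)^[j] τ, hm.iterate j ⟨⟨0, rfl⟩, hτ⟩, ?_⟩
  rw [← hi, Function.iterate_succ_apply']

theorem aux_sum (σ : Equiv.Perm B) (T : Set B) (hT : tilde σ T = T) (τ : B) (hτ : τ ∉ T)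
    (f : B → ℚ) : ∑ i ∈ Finset.Icc 1 ((orbit σ τ \ T).ncard), f ((sigbar σ T)^[i] τ) =
      ∑ β ∈ (orbit σ τ \ T).toFinset, f β := by
  have hτm : τ ∈ orbit σ τ \ T := ⟨⟨0, rfl⟩, hτ⟩
  have hm := aux_maps σ T hT τ hτ
  set m := Function.minimalPeriod (sigbar σ T) τ with hmd
  have hmpos : 0 < m := by
    obtain ⟨i, i0, hi⟩ := aux_reach σ T hT τ τ hτ hτm
    exact Function.IsPeriodicPt.minimalPeriod_pos i0 hi
  have him : (Finset.Icc 1 m).image (fun i => (sigbar σ T)^[i] τ) = (orbit σ τ \ T).toFinset := by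
    ext δ
    simp only [Finset.mem_image, Finset.mem_Icc, Set.mem_toFinset]
    constructor
    · rintro ⟨i, -, rfl⟩
      exact hm.iterate i hτm
    · intro hδ
      obtain ⟨i, i0, hi⟩ := aux_reach σ T hT τ δ hτ hδ
      have hmod : (sigbar σ T)^[i % m] τ = δ := by
        rw [← hi]; exact Function.iterate_mod_minimalPeriod_eq
      have hlt := Nat.mod_lt i hmpos
      rcases Nat.eq_zero_or_pos (i % m) with h0 | h0
      · refine ⟨m, ⟨hmpos, le_rfl⟩, ?_⟩
        rw [hmd, Function.iterate_minimalPeriod, ← hmod, h0]; rfl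
      · exact ⟨_, ⟨h0, hlt.le⟩, hmod⟩
  have hcard : (orbit σ τ \ T).ncard = (orbit σ τ \ T).toFinset.card :=
    Set.ncard_eq_toFinset_card' _
  have hle : m ≤ (orbit σ τ \ T).toFinset.card := by
    have : ((Finset.range m).image (fun i => (sigbar σ T)^[i] τ)).card = m := by
      rw [Finset.card_image_of_injOn, Finset.card_range]
      intro i hi j hj he
      simp at hi hj
      exact Function.iterate_injOn_Iio_minimalPeriod hi hj he
    rw [← this]
    apply Finset.card_le_card
    intro δ
    simp only [Finset.mem_image, Set.mem_toFinset]
    rintro ⟨i, -, rfl⟩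
    exact hm.iterate i hτm
  have hge : (orbit σ τ \ T).toFinset.card ≤ m := by
    rw [← him]
    exact Finset.card_image_le.trans (by simp)
  have hs : (orbit σ τ \ T).ncard = m := by omega
  rw [hs, ← him, Finset.sum_image]
  apply Finset.card_image_iff.1
  rw [him]; simp; simp at hle hge; omega

end helpers

end GO

/-- suppose `T̃ = T`, let `τ ∈ 𝔹_𝔭 − T_𝔭` and `s = |𝔹_𝔭 − T_𝔭|`.  Then
`σ̄ : β ↦ σ^{n_β}β` permutes `𝔹_𝔭 − T_𝔭`, and, with `n_i(τ)` the unique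
`0 < n ≤ |𝔹_𝔭|` such that `σ̄^iτ = σ^n τ`, for every `κ`, writing `ℓ = i_T(κ)`,
`p^{n₁(τ)} L_{T,τ}(κ) = Σ_{i=1}^{s} p^{n_i(τ)} ℓ_{σ̄^iτ}`. -/
theorem statement16 {B : Type*} [Fintype B] [DecidableEq B] [Nonempty B]
    (σ : Equiv.Perm B) (p : ℕ) (hp : p.Prime) (T : Set B)
    (hT : GO.tilde σ T = T) (τ : B) (hτ : τ ∉ T) :
    Set.BijOn (GO.sigbar σ T) (GO.orbit σ τ \ T) (GO.orbit σ τ \ T) ∧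
    ∀ κ : B → ℚ,
      (p : ℚ) ^ GO.steps σ τ ((GO.sigbar σ T)^[1] τ) * GO.LT σ p T τ κ =
      ∑ i ∈ Finset.Icc 1 ((GO.orbit σ τ \ T).ncard),
        (p : ℚ) ^ GO.steps σ τ ((GO.sigbar σ T)^[i] τ) *
          (if h : (GO.sigbar σ T)^[i] τ ∉ T
           then GO.iT σ p T κ ⟨(GO.sigbar σ T)^[i] τ, h⟩ else 0) := by
  refine ⟨GO.aux_bij σ T hT τ hτ, fun κ => ?_⟩
  have h0 : τ ∈ GO.orbit σ τ := ⟨0, rfl⟩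
  rw [GO.aux_sum σ T hT τ hτ (fun β => (p : ℚ) ^ GO.steps σ τ β *
          (if h : β ∉ T then GO.iT σ p T κ ⟨β, h⟩ else 0))]
  rw [Function.iterate_one, GO.aux_steps_sigbar σ T hT τ hτ, GO.LT, hT, if_neg hτ,
    GO.aux_mu σ T hT τ τ hτ h0]
  change _ * GO.Lfun1 σ p _ (GO.sigbar σ T τ) κ = _
  rw [GO.aux_Lfun1 σ p _ τ (GO.sigbar σ T τ) ⟨_, rfl⟩, Finset.mul_sum]
  have h1 : ∀ β ∈ (GO.orbit σ τ \ T).toFinset, (p : ℚ) ^ GO.steps σ τ β *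
      (if h : β ∉ T then GO.iT σ p T κ ⟨β, h⟩ else 0) =
      ∑ γ ∈ (GO.orbit σ τ).toFinset, if (σ⁻¹ ^ GO.nu σ T γ) γ = β then
        κ γ * (-(p : ℚ)) ^ GO.nu σ T γ * (p : ℚ) ^ GO.steps σ τ β else 0 := by
    intro β hβ
    simp only [Set.mem_toFinset] at hβ
    rw [dif_pos hβ.2, GO.iT, Finset.mul_sum]
    symm
    apply Finset.sum_subset_zero_on_sdiff (Finset.subset_univ _)
    · intro γ hγ
      simp only [Finset.mem_sdiff, Finset.mem_univ, true_and, Set.mem_toFinset] at hγ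
      have : (σ⁻¹ ^ GO.nu σ T γ) γ ≠ β := by
        intro he
        apply hγ
        have := GO.aux_inv_orbit σ γ (GO.nu σ T γ)
        rw [he] at this
        exact GO.aux_orbit_trans σ hβ.1 (GO.aux_orbit_symm σ this)
      simp only [if_neg this, ite_self, mul_zero]
    · intro γ hγ
      simp only [Set.mem_toFinset] at hγ
      rw [if_neg (GO.aux_not_sub σ T γ τ hτ hγ)]
      split_ifs
      · ring
      · ring
  rw [Finset.sum_congr rfl h1, Finset.sum_comm]
  apply Finset.sum_congr rfl
  intro γ hγ
  simp only [Set.mem_toFinset] at hγ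
  rw [Finset.sum_ite_eq, if_pos, GO.aux_sign σ T hT γ τ hτ hγ]
  · have := GO.aux_expo σ T hT τ γ hτ hγ
    calc _ = (-1) ^ GO.nu σ T γ * (p : ℚ) ^ (GO.nn σ T τ + GO.steps0 σ (GO.sigbar σ T τ) γ)
              * κ γ := by ring
      _ = _ := by rw [this, neg_pow (p : ℚ)]; ring
  · simp only [Set.mem_toFinset]
    exact ⟨GO.aux_orbit_trans σ hγ (GO.aux_inv_orbit σ γ _), (GO.aux_nu σ T γ τ hτ hγ).1⟩
end

section
/- Let T ⊆ 𝔹 and β ∈ 𝔹(T), and suppose {σ^iβ : 0 < i < n_β} ∩ (T̃ − T) = ∅. Set T⁺ = T ∪ {σ^{n_β}β}. Then L_{T,f_β,τ} = L_{T⁺,τ} for every τ ∈ 𝔹 − T⁺ (where L_{T⁺,τ} is defined from T⁺ as L_{T,τ} is from T), and consequently 𝒟_{T,f_β} = 𝒟_{T⁺}. -/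
/- Setting: `B` is the finite nonempty set 𝔹 equipped with a permutation `σ` (Frobenius),
and `p` is a prime.  Weights live in `ℚ^𝔹 = (B → ℚ)`.  The orbits `𝔹_𝔭` of `σ` are the sets
`orbit σ β`, and for `T ⊆ 𝔹` we have `T_𝔭 = T ∩ orbit σ β`. -/

open scoped Classical

namespace GO

lemma pw {B : Type*} (σ : Equiv.Perm B) (i j : ℕ) (x : B) :
    (σ ^ i) ((σ ^ j) x) = (σ ^ (i + j)) x := by
  rw [pow_add]; rfl

lemma pw1 {B : Type*} (σ : Equiv.Perm B) (j : ℕ) (x : B) :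
    σ ((σ ^ j) x) = (σ ^ (j + 1)) x := by
  rw [add_comm, pow_add]; rfl

lemma pw1' {B : Type*} (σ : Equiv.Perm B) (j : ℕ) (x : B) :
    (σ ^ j) (σ x) = (σ ^ (j + 1)) x := by
  rw [pow_succ]; rfl

lemma pwz {B : Type*} (σ : Equiv.Perm B) (x : B) : (σ ^ 0) x = x := rfl

lemma pw_cancel {B : Type*} (σ : Equiv.Perm B) {i j : ℕ} (h : i ≤ j) {x y : B}
    (hxy : (σ ^ i) x = (σ ^ j) y) : x = (σ ^ (j - i)) y := by
  apply (σ ^ i).injective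
  rw [hxy, pw]
  congr 2
  omega

lemma so_iff {B : Type*} [Finite B] (σ : Equiv.Perm B) (a b : B) :
    sameOrbit σ a b ↔ σ.SameCycle a b := by
  constructor
  · rintro ⟨n, h⟩
    exact ⟨n, by simpa using h⟩
  · intro h
    exact h.exists_nat_pow_eq

lemma so_refl {B : Type*} (σ : Equiv.Perm B) (a : B) : sameOrbit σ a a := ⟨0, rfl⟩

lemma so_symm {B : Type*} [Finite B] {σ : Equiv.Perm B} {a b : B}
    (h : sameOrbit σ a b) : sameOrbit σ b a := by
  rw [so_iff] at *; exact h.symm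

lemma so_trans {B : Type*} [Finite B] {σ : Equiv.Perm B} {a b c : B}
    (h : sameOrbit σ a b) (h' : sameOrbit σ b c) : sameOrbit σ a c := by
  rw [so_iff] at *; exact h.trans h'

lemma so_pow {B : Type*} (σ : Equiv.Perm B) (n : ℕ) (a : B) : sameOrbit σ a ((σ ^ n) a) :=
  ⟨n, rfl⟩

lemma so_pos {B : Type*} [Finite B] {σ : Equiv.Perm B} {a b : B}
    (h : sameOrbit σ a b) : ∃ n, 0 < n ∧ (σ ^ n) a = b := by
  rw [so_iff] at h
  obtain ⟨i, hi, -, h⟩ := h.exists_pow_eq''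
  exact ⟨i, hi, h⟩

lemma orbit_eq {B : Type*} [Finite B] {σ : Equiv.Perm B} {a b : B}
    (h : sameOrbit σ a b) : orbit σ a = orbit σ b := by
  ext x
  exact ⟨fun hx => so_trans (so_symm h) hx, fun hx => so_trans h hx⟩

lemma steps0_spec {B : Type*} {σ : Equiv.Perm B} {a b : B}
    (h : sameOrbit σ a b) : (σ ^ steps0 σ a b) a = b :=
  Nat.sInf_mem (s := {n : ℕ | (σ ^ n) a = b}) h

lemma steps0_le {B : Type*} {σ : Equiv.Perm B} {a b : B} {n : ℕ}
    (h : (σ ^ n) a = b) : steps0 σ a b ≤ n :=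
  Nat.sInf_le (s := {n : ℕ | (σ ^ n) a = b}) h

lemma steps_spec {B : Type*} [Finite B] {σ : Equiv.Perm B} {a b : B}
    (h : sameOrbit σ a b) : 0 < steps σ a b ∧ (σ ^ steps σ a b) a = b :=
  Nat.sInf_mem (s := {n : ℕ | 0 < n ∧ (σ ^ n) a = b}) (so_pos h)

lemma steps_le {B : Type*} {σ : Equiv.Perm B} {a b : B} {n : ℕ} (h0 : 0 < n)
    (h : (σ ^ n) a = b) : steps σ a b ≤ n :=
  Nat.sInf_le (s := {n : ℕ | 0 < n ∧ (σ ^ n) a = b}) ⟨h0, h⟩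

/-- injectivity below steps0 -/
lemma steps0_inj {B : Type*} {σ : Equiv.Perm B} {a b : B} (h : sameOrbit σ a b) {i j : ℕ}
    (hj : j ≤ steps0 σ a b) (hij : i < j) : (σ ^ i) a ≠ (σ ^ j) a := by
  intro he
  have h1 := steps0_spec h
  have : (σ ^ (steps0 σ a b - j + i)) a = b := by
    rw [← pw, he, pw, ← h1]; congr 2
    rw [h1]; omega
  have := steps0_le this
  omega

lemma steps0_le_inv {B : Type*} [Finite B] {σ : Equiv.Perm B} {a b : B} (h : sameOrbit σ a b) :
    steps0 σ a b ≤ steps0 σ a (σ⁻¹ a) := by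
  have h0 : sameOrbit σ a (σ⁻¹ a) := by
    rw [so_iff]; exact ⟨-1, by simp⟩
  have h1 := steps0_spec h0
  have h2 := steps0_spec h
  by_contra hlt
  push Not at hlt
  have h3 : (σ ^ (steps0 σ a (σ⁻¹ a) + 1)) a = a := by
    rw [← pw1, h1]; simp
  have : (σ ^ (steps0 σ a b - (steps0 σ a (σ⁻¹ a) + 1))) a = b := by
    have h4 := pw σ (steps0 σ a b - (steps0 σ a (σ⁻¹ a) + 1)) (steps0 σ a (σ⁻¹ a) + 1) a
    rwa [h3, Nat.sub_add_cancel hlt, h2] at h4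
  have := steps0_le this
  omega

lemma steps0_succ {B : Type*} [Finite B] {σ : Equiv.Perm B} {a b : B} (h : sameOrbit σ a b)
    (hne : σ b ≠ a) : steps0 σ a (σ b) = steps0 σ a b + 1 := by
  have h2 := steps0_spec h
  apply le_antisymm
  · apply steps0_le
    rw [← pw1, h2]
  · have h1 : sameOrbit σ a (σ b) := so_trans h ⟨1, by simp⟩
    have h3 := steps0_spec h1
    rcases hk : steps0 σ a (σ b) with _ | k
    · rw [hk] at h3
      exact absurd h3.symm hne
    · rw [hk, ← pw1] at h3
      have := steps0_le (σ.injective h3)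
      omega

lemma steps0_add {B : Type*} [Finite B] {σ : Equiv.Perm B} {a b : B} (h : sameOrbit σ a b)
    (n : ℕ) (hne : ∀ j, 0 < j → j ≤ n → (σ ^ j) b ≠ a) :
    steps0 σ a ((σ ^ n) b) = steps0 σ a b + n := by
  induction n with
  | zero => rfl
  | succ n ih =>
    rw [← pw1, steps0_succ (so_trans h (so_pow _ _ _)), ih, add_assoc]
    · intro j h1 h2; exact hne j h1 (by omega)
    · rw [pw1]; exact hne _ (by omega) le_rfl

/-! mu -/

lemma mu_spec {B : Type*} {σ : Equiv.Perm B} [Finite B] {T : Set B} {a : B}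
    (h : ¬ orbit σ a ⊆ T) :
    0 < mu σ T a ∧ (σ ^ mu σ T a) a ∉ T ∧ ∀ i, 0 < i → i < mu σ T a → (σ ^ i) a ∈ T := by
  have hne : {i : ℕ | 0 < i ∧ (σ ^ i) a ∉ T}.Nonempty := by
    rw [Set.not_subset] at h
    obtain ⟨b, hb, hbT⟩ := h
    obtain ⟨n, hn, rfl⟩ := so_pos hb
    exact ⟨n, hn, hbT⟩
  have he : mu σ T a = sInf {i : ℕ | 0 < i ∧ (σ ^ i) a ∉ T} := by
    rw [mu, if_neg h]
  rw [he]
  refine ⟨(Nat.sInf_mem hne).1, (Nat.sInf_mem hne).2, ?_⟩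
  intro i hi hlt
  by_contra hc
  exact absurd (Nat.sInf_le (s := {i : ℕ | 0 < i ∧ (σ ^ i) a ∉ T}) ⟨hi, hc⟩) (by omega)

lemma nonfull_pow {B : Type*} {σ : Equiv.Perm B} {T : Set B} {a : B} {k : ℕ}
    (h2 : (σ ^ k) a ∉ T) : ¬ orbit σ a ⊆ T := fun h => h2 (h (so_pow _ _ _))

lemma nonfull {B : Type*} (σ : Equiv.Perm B) {T : Set B} {a : B}
    (h2 : a ∉ T) : ¬ orbit σ a ⊆ T := fun h => h2 (h (so_refl _ _))

lemma mu_eq {B : Type*} {σ : Equiv.Perm B} [Finite B] {T : Set B} {a : B} {k : ℕ} (h1 : 0 < k)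
    (h2 : (σ ^ k) a ∉ T) (h3 : ∀ i, 0 < i → i < k → (σ ^ i) a ∈ T) : mu σ T a = k := by
  obtain ⟨m1, m2, m3⟩ := mu_spec (nonfull_pow h2)
  rcases lt_trichotomy (mu σ T a) k with h | h | h
  · exact absurd (h3 _ m1 h) m2
  · exact h
  · exact absurd (m3 _ h1 h) h2

lemma mu_le {B : Type*} {σ : Equiv.Perm B} [Finite B] {T : Set B} {a : B} {k : ℕ} (h1 : 0 < k)
    (h2 : (σ ^ k) a ∉ T) : mu σ T a ≤ k := by
  obtain ⟨m1, m2, m3⟩ := mu_spec (nonfull_pow h2)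
  by_contra h
  exact h2 (m3 k h1 (by omega))

lemma ipw {B : Type*} (σ : Equiv.Perm B) {i j : ℕ} (h : i ≤ j) (x : B) :
    (σ⁻¹ ^ i) ((σ ^ j) x) = (σ ^ (j - i)) x := by
  rw [inv_pow, Equiv.Perm.inv_eq_iff_eq, pw]
  congr 2
  omega

lemma chain_card {B : Type*} {σ : Equiv.Perm B} {T C : Set B} {δ : B} {m : ℕ}
    (h1 : σ δ ∉ T) (h3 : ∀ i ≤ m, (σ⁻¹ ^ i) δ ∈ T) (hC : C = {τ | ∃ i ≤ m, τ = (σ⁻¹ ^ i) δ}) :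
    C.ncard = m + 1 := by
  have : C = (fun i => (σ⁻¹ ^ i) δ) '' (↑(Finset.range (m + 1)) : Set ℕ) := by
    rw [hC]; ext x
    simp only [Set.mem_ofPred_eq, Set.mem_image, Finset.coe_range, Set.mem_Iio]
    constructor
    · rintro ⟨i, hi, rfl⟩; exact ⟨i, by omega, rfl⟩
    · rintro ⟨i, hi, rfl⟩; exact ⟨i, by omega, rfl⟩
  rw [this, Set.InjOn.ncard_image]
  · rw [Set.ncard_coe_finset, Finset.card_range]
  · have key : ∀ i j, i < j → j ≤ m → (σ⁻¹ ^ i) δ ≠ (σ⁻¹ ^ j) δ := by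
      intro i j hij hj he
      have h5 := pw_cancel _ hij.le he
      obtain ⟨k, hk⟩ : ∃ k, j - i = k + 1 := ⟨j - i - 1, by omega⟩
      rw [hk, ← pw1] at h5
      apply h1
      rw [h5]
      simpa using h3 k (by omega)
    intro i hi j hj he
    simp only [Finset.coe_range, Set.mem_Iio] at hi hj
    rcases lt_trichotomy i j with h | h | h
    · exact absurd he (key i j h (by omega))
    · exact h
    · exact absurd he.symm (key j i h (by omega))

lemma mem_tilde {B : Type*} [Finite B] {σ : Equiv.Perm B} {T : Set B} {a : B} :
    a ∈ tilde σ T ↔ a ∈ T ∨ Even (mu σ T a) := by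
  by_cases ha : a ∈ T
  · simp [tilde, ha]
  simp only [ha, false_or]
  constructor
  · rintro (h | h)
    · exact absurd h ha
    · simp only [Set.mem_iUnion] at h
      obtain ⟨C, ⟨δ, m, h1, h2, h3, hC⟩, h⟩ := h
      have hcard := chain_card h1 h3 hC
      have hCT : C ⊆ T := by
        rw [hC]; rintro x ⟨i, hi, rfl⟩; exact h3 i hi
      rw [chainExt, hcard] at h
      split_ifs at h with hodd
      · rcases h with h | ⟨x, hx, rfl⟩
        · exact absurd (hCT h) ha
        · rw [hC] at hx
          obtain ⟨i, hi, rfl⟩ := hx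
          rw [pw1] at ha ⊢
          have him : i = m := by
            by_contra hne
            exact ha (h3 (i + 1) (by omega))
          subst him
          have hmu : mu σ T ((σ⁻¹ ^ (i + 1)) δ) = i + 2 := by
            apply mu_eq (by omega)
            · have : (σ ^ (i + 2)) ((σ⁻¹ ^ (i + 1)) δ) = σ δ := by
                rw [← pw1, inv_pow]; simp
              rwa [this]
            · intro j hj hj2
              have : (σ ^ j) ((σ⁻¹ ^ (i + 1)) δ) = (σ⁻¹ ^ (i + 1 - j)) δ := by
                have h6 := ipw σ⁻¹ (i := j) (j := i + 1) (by omega) δ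
                simpa using h6
              rw [this]; exact h3 _ (by omega)
          rw [hmu]
          rcases hodd with ⟨k, hk⟩
          exact ⟨k + 1, by omega⟩
      · exact absurd (hCT h) ha
  · intro hev
    obtain ⟨m1, m2, m3⟩ := mu_spec (nonfull σ ha)
    obtain ⟨k, hk⟩ : ∃ k, mu σ T a = k + 2 := by
      rcases hev with ⟨r, hr⟩
      exact ⟨mu σ T a - 2, by omega⟩
    rw [hk] at m1 m2 m3 hev
    right
    simp only [Set.mem_iUnion]
    have h1 : σ ((σ ^ (k + 1)) a) ∉ T := by rw [pw1]; exact m2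
    have h3 : ∀ i ≤ k, (σ⁻¹ ^ i) ((σ ^ (k + 1)) a) ∈ T := by
      intro i hi
      rw [ipw σ (by omega)]
      exact m3 _ (by omega) (by omega)
    refine ⟨_, ⟨(σ ^ (k + 1)) a, k, h1, ?_, h3, rfl⟩, ?_⟩
    · rw [ipw σ le_rfl, Nat.sub_self]; exact ha
    · rw [chainExt, chain_card h1 h3 rfl, if_pos]
      · right
        refine ⟨σ a, ⟨k, le_rfl, ?_⟩, by simp⟩
        rw [ipw σ (by omega), Nat.add_sub_cancel_left]; simp
      · rcases hev with ⟨r, hr⟩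
        exact ⟨r - 1, by omega⟩

end GO

namespace GO

lemma eps_full {B : Type*} {σ : Equiv.Perm B} {T : Set B} {a : B}
    (h : orbit σ a ⊆ T) : epsT σ T a = 0 := by
  rw [epsT, if_pos h]

lemma eps_nonfull {B : Type*} [Finite B] {σ : Equiv.Perm B} {T : Set B} {a : B}
    (h : ¬ orbit σ a ⊆ T) : epsT σ T a = -(-1) ^ (mu σ T a) := by
  have h1 := (mu_spec h).1
  have key : (-1 : ℚ) ^ (mu σ T a - 1) = -(-1) ^ (mu σ T a) := by
    obtain ⟨k, hk⟩ : ∃ k, mu σ T a = k + 1 := ⟨mu σ T a - 1, by omega⟩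
    rw [hk, pow_succ]; simp
  rw [epsT, if_neg h]
  split_ifs with h2
  · exact key
  · rw [mem_tilde] at h2
    push Not at h2
    have := h2.2
    rw [Nat.not_even_iff_odd] at this
    rw [this.neg_one_pow]; simp

lemma eps_notmem {B : Type*} [Finite B] {σ : Equiv.Perm B} {T : Set B} {a : B}
    (h : a ∉ tilde σ T) : epsT σ T a = 1 := by
  rw [epsT, if_neg, if_neg h]
  exact nonfull σ (fun h' => h (Or.inl h'))

lemma eps_td {B : Type*} [Finite B] {σ : Equiv.Perm B} {T : Set B} {a : B}
    (h : a ∈ tilde σ T) (h' : a ∉ T) : epsT σ T a = -1 := by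
  rw [eps_nonfull (nonfull σ h')]
  have := (mem_tilde.1 h).resolve_left h'
  rw [this.neg_one_pow]

lemma eps_le {B : Type*} [Finite B] {σ : Equiv.Perm B} {T : Set B} {a : B} :
    epsT σ T a ≤ 1 := by
  by_cases h : orbit σ a ⊆ T
  · rw [eps_full h]; norm_num
  · rw [eps_nonfull h]
    rcases neg_one_pow_eq_or ℚ (mu σ T a) with h | h <;> rw [h] <;> norm_num

lemma mu_succ {B : Type*} [Finite B] {σ : Equiv.Perm B} {T : Set B} {a : B}
    (h : ¬ orbit σ a ⊆ T) (h1 : σ a ∈ T) : mu σ T a = mu σ T (σ a) + 1 := by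
  have h2 : ¬ orbit σ (σ a) ⊆ T := by
    rwa [← orbit_eq (⟨1, by simp⟩ : sameOrbit σ a (σ a))]
  obtain ⟨m1, m2, m3⟩ := mu_spec h2
  apply mu_eq (by omega)
  · rwa [← pw1']
  · intro i hi hi2
    obtain ⟨k, rfl⟩ : ∃ k, i = k + 1 := ⟨i - 1, by omega⟩
    rw [← pw1']
    rcases Nat.eq_zero_or_pos k with rfl | hk
    · exact h1
    · exact m3 k hk (by omega)

lemma eps_succ {B : Type*} [Finite B] {σ : Equiv.Perm B} {T : Set B} {a : B}
    (h1 : σ a ∈ T) : epsT σ T (σ a) = - epsT σ T a := by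
  have ho := orbit_eq (⟨1, by simp⟩ : sameOrbit σ a (σ a))
  by_cases h : orbit σ a ⊆ T
  · rw [eps_full h, eps_full (ho ▸ h)]; simp
  · rw [eps_nonfull h, eps_nonfull (ho ▸ h), mu_succ h h1, pow_succ]; simp

lemma td_succ {B : Type*} [Finite B] {σ : Equiv.Perm B} {T : Set B} {a : B}
    (h : a ∈ tilde σ T) (h' : a ∉ T) : σ a ∈ T := by
  have h1 := (mem_tilde.1 h).resolve_left h'
  obtain ⟨m1, m2, m3⟩ := mu_spec (nonfull σ h')
  rcases h1 with ⟨r, hr⟩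
  simpa using m3 1 (by omega) (by omega)

/-! linear functional -/

/-- linear version of Lfun -/
noncomputable def LfunL {B : Type*} (σ : Equiv.Perm B) (p : ℕ) (ε : B → ℚ) (a b : B) : (B → ℚ) →ₗ[ℚ] ℚ where
  toFun := Lfun σ p ε a b
  map_add' x y := by
    simp only [Lfun, Pi.add_apply, mul_add, Finset.sum_add_distrib]
  map_smul' c x := by
    simp only [Lfun, Pi.smul_apply, smul_eq_mul, RingHom.id_apply, Finset.mul_sum]
    apply Finset.sum_congr rfl
    intros; ring

/-- linear version of LT -/
noncomputable def LTL {B : Type*} (σ : Equiv.Perm B) (p : ℕ) (T : Set B) (τ : B) : (B → ℚ) →ₗ[ℚ] ℚ :=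
  if τ ∈ tilde σ T then LfunL σ p (epsT σ T) τ ((σ ^ (mu σ T τ - 1)) τ)
  else LfunL σ p (epsT σ T) ((σ ^ mu σ T τ) τ) (σ⁻¹ ((σ ^ mu σ T τ) τ))

lemma LTL_apply {B : Type*} (σ : Equiv.Perm B) (p : ℕ) (T : Set B) (τ : B) (κ : B → ℚ) :
    LTL σ p T τ κ = LT σ p T τ κ := by
  rw [LTL, LT]; split_ifs <;> rfl

lemma Lfun_e {B : Type*} [DecidableEq B] {σ : Equiv.Perm B} {p : ℕ} {ε : B → ℚ} {a b : B}
    (h : sameOrbit σ a b) (i : ℕ) (hi : i ≤ steps0 σ a b) :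
    LfunL σ p ε a b (e ((σ ^ i) a)) = ε ((σ ^ i) a) * (p : ℚ) ^ i := by
  change Lfun σ p ε a b _ = _
  rw [Lfun, Finset.sum_eq_single i]
  · simp [e]
  · intro j hj hne
    rw [Finset.mem_range] at hj
    have : (σ ^ j) a ≠ (σ ^ i) a := by
      rcases lt_or_gt_of_ne hne with h1 | h1
      · exact steps0_inj h hi h1
      · exact (steps0_inj h (by omega) h1).symm
    simp [e, this]
  · intro h1
    exact absurd (Finset.mem_range.2 (by omega)) h1

lemma Lfun_e0 {B : Type*} [DecidableEq B] {σ : Equiv.Perm B} {p : ℕ} {ε : B → ℚ} {a b c : B}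
    (h : ∀ i ≤ steps0 σ a b, (σ ^ i) a ≠ c) :
    LfunL σ p ε a b (e c) = 0 := by
  change Lfun σ p ε a b _ = _
  rw [Lfun]
  apply Finset.sum_eq_zero
  intro j hj
  rw [Finset.mem_range] at hj
  simp [e, h j (by omega)]

/-! coefficients, second case -/
lemma xB {B : Type*} [Finite B] [DecidableEq B] {σ : Equiv.Perm B} {p : ℕ} {T : Set B} {τ : B}
    (h : τ ∉ tilde σ T) {γ : B} (hγ : sameOrbit σ τ γ) :
    LTL σ p T τ (e γ) = epsT σ T γ * (p : ℚ) ^ steps0 σ ((σ ^ mu σ T τ) τ) γ := by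
  rw [LTL, if_neg h]
  have h1 : sameOrbit σ ((σ ^ mu σ T τ) τ) γ := so_trans (so_symm (so_pow _ _ _)) hγ
  have h0 : sameOrbit σ ((σ ^ mu σ T τ) τ) (σ⁻¹ ((σ ^ mu σ T τ) τ)) := by
    rw [so_iff]; exact ⟨-1, by simp⟩
  have h2 := Lfun_e (p := p) (ε := epsT σ T) h0 _ (steps0_le_inv h1)
  rwa [steps0_spec h1] at h2

lemma xB0 {B : Type*} [Finite B] [DecidableEq B] {σ : Equiv.Perm B} {p : ℕ} {T : Set B} {τ : B}
    (h : τ ∉ tilde σ T) {γ : B} (hγ : ¬ sameOrbit σ τ γ) :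
    LTL σ p T τ (e γ) = 0 := by
  rw [LTL, if_neg h]
  apply Lfun_e0
  rintro i - hi
  apply hγ
  rw [← hi]
  exact so_trans (so_pow _ _ _) (so_pow _ _ _)

/-! coefficients, first case -/
lemma stepsA {B : Type*} [Finite B] {σ : Equiv.Perm B} {T : Set B} {τ : B}
    (h' : τ ∉ T) : steps0 σ τ ((σ ^ (mu σ T τ - 1)) τ) = mu σ T τ - 1 := by
  obtain ⟨m1, m2, m3⟩ := mu_spec (nonfull σ h')
  apply le_antisymm (steps0_le rfl)
  by_contra hlt
  push Not at hlt
  have h1 := steps0_spec (so_pow σ (mu σ T τ - 1) τ)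
  have h2 := congrArg σ h1
  rw [pw1, pw1, Nat.sub_add_cancel m1] at h2
  apply m2
  rw [← h2]
  exact m3 _ (by omega) (by omega)

lemma xA {B : Type*} [Finite B] [DecidableEq B] {σ : Equiv.Perm B} {p : ℕ} {T : Set B} {τ : B}
    (h : τ ∈ tilde σ T) (h' : τ ∉ T) {i : ℕ} (hi : i < mu σ T τ) :
    LTL σ p T τ (e ((σ ^ i) τ)) = epsT σ T ((σ ^ i) τ) * (p : ℚ) ^ i := by
  rw [LTL, if_pos h]
  apply Lfun_e (so_pow _ _ _)
  rw [stepsA h']; omega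

lemma xA0 {B : Type*} [Finite B] [DecidableEq B] {σ : Equiv.Perm B} {p : ℕ} {T : Set B} {τ : B}
    (h : τ ∈ tilde σ T) (h' : τ ∉ T) {c : B} (hc : ∀ i < mu σ T τ, (σ ^ i) τ ≠ c) :
    LTL σ p T τ (e c) = 0 := by
  rw [LTL, if_pos h]
  apply Lfun_e0
  rw [stepsA h']
  have := (mu_spec (nonfull σ h')).1
  intro i hi
  exact hc i (by omega)

lemma xA_self {B : Type*} [Finite B] [DecidableEq B] {σ : Equiv.Perm B} {p : ℕ} {T : Set B} {τ : B}
    (h : τ ∈ tilde σ T) (h' : τ ∉ T) : LTL σ p T τ (e τ) = -1 := by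
  have := xA (p := p) h h' (mu_spec (nonfull σ h')).1
  simpa [eps_td h h'] using this

lemma xA_zero {B : Type*} [Finite B] [DecidableEq B] {σ : Equiv.Perm B} {p : ℕ} {T : Set B} {τ : B}
    (h : τ ∈ tilde σ T) (h' : τ ∉ T) {c : B} (hc : c ∉ T) (hne : c ≠ τ) :
    LTL σ p T τ (e c) = 0 := by
  apply xA0 h h'
  intro i hi he
  rcases Nat.eq_zero_or_pos i with rfl | h0
  · exact hne he.symm
  · exact hc (he ▸ (mu_spec (nonfull σ h')).2.2 i h0 hi)

/-- kills `b`. -/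
lemma xK {B : Type*} [Finite B] [DecidableEq B] {σ : Equiv.Perm B} {p : ℕ} {T : Set B} {τ : B}
    (h' : τ ∉ T) {δ : B} (hδ : σ δ ∈ T) :
    LTL σ p T τ (e (σ δ)) = - ((p : ℚ) * LTL σ p T τ (e δ)) := by
  obtain ⟨m1, m2, m3⟩ := mu_spec (nonfull σ h')
  by_cases h : τ ∈ tilde σ T
  · by_cases hl : ∃ i < mu σ T τ, (σ ^ i) τ = δ
    · obtain ⟨i, hi, rfl⟩ := hl
      have hi2 : i + 1 < mu σ T τ := by
        by_contra hc
        have : i + 1 = mu σ T τ := by omega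
        rw [pw1, this] at hδ
        exact m2 hδ
      rw [eq_comm, xA h h' hi, pw1, xA h h' hi2, ← pw1, eps_succ hδ]
      ring
    · push Not at hl
      rw [xA0 h h' hl, xA0 h h']
      · simp
      · intro i hi he
        rcases i with _ | i
        · exact h' (by rw [pwz] at he; rw [he]; exact hδ)
        · rw [← pw1] at he
          exact hl i (by omega) (σ.injective he)
  · by_cases ho : sameOrbit σ τ δ
    · rw [xB h ho, xB h (so_trans ho ⟨1, by simp⟩), eps_succ hδ, steps0_succ]
      · ring
      · exact so_trans (so_symm (so_pow _ _ _)) ho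
      · intro he; rw [he] at hδ; exact m2 hδ
    · rw [xB0 h ho, xB0 h]
      · simp
      · intro hc
        exact ho (so_trans hc (so_symm ⟨1, by simp⟩))

lemma L_b {B : Type*} [Finite B] [DecidableEq B] {σ : Equiv.Perm B} {p : ℕ} {T : Set B} {τ : B}
    (h' : τ ∉ T) {γ : B} (hγ : γ ∈ T) : LTL σ p T τ (bsimple σ p γ) = 0 := by
  have := xK (p := p) h' (δ := σ⁻¹ γ) (σ := σ) (by simpa using hγ)
  rw [bsimple, map_add, map_smul, smul_eq_mul]
  have h2 : σ (σ⁻¹ γ) = γ := by simp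
  rw [h2] at this
  rw [this]; ring

lemma L_h {B : Type*} [Finite B] [DecidableEq B] {σ : Equiv.Perm B} {p : ℕ} (hp : 1 < p)
    {T : Set B} {τ : B}
    (h' : τ ∉ T) {β β' : B} (hβ : β ∉ T) (hβ' : β' ∈ Tscr σ T) (hs : sameOrbit σ β β') :
    0 ≤ LTL σ p T τ (hvec σ p β β') := by
  have hp0 : (0 : ℚ) ≤ p := by positivity
  have hp1 : (1 : ℚ) ≤ p := by exact_mod_cast hp.le
  rw [hvec, map_add, map_smul, map_neg, smul_eq_mul]
  by_cases h : τ ∈ tilde σ T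
  · have h0 : ∀ γ, γ ∉ T → LTL σ p T τ (e γ) ≤ 0 := by
      intro γ hγ
      by_cases hne : γ = τ
      · rw [hne, xA_self h h']; norm_num
      · rw [xA_zero h h' hγ hne]
    have h1 : 0 ≤ LTL σ p T τ (e β') := by
      rcases hβ' with hβ' | ⟨δ, ⟨hδ, hδT⟩, rfl⟩
      · rw [xA_zero h h' (fun hc => hβ' (Or.inl hc))]
        rintro rfl; exact hβ' h
      · rw [xK h' (td_succ hδ hδT)]
        have := mul_nonneg hp0 (neg_nonneg.2 (h0 δ hδT))
        linarith
    have := h0 β hβ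
    have := mul_nonneg (pow_nonneg hp0 (steps σ β' β)) h1
    linarith
  · by_cases ho : sameOrbit σ τ β
    · have he : epsT σ T β' = 1 := by
        rcases hβ' with hβ' | ⟨δ, ⟨hδ, hδT⟩, rfl⟩
        · exact eps_notmem hβ'
        · rw [eps_succ (td_succ hδ hδT), eps_td hδ hδT]; norm_num
      have ho' := so_trans ho hs
      rw [xB h ho, xB h ho', he]
      set a := (σ ^ mu σ T τ) τ with ha
      have hao : sameOrbit σ a β' := so_trans (so_symm (so_pow _ _ _)) ho'
      have hle : steps0 σ a β ≤ steps σ β' β + steps0 σ a β' := by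
        apply steps0_le
        rw [← pw, steps0_spec hao, (steps_spec (so_symm hs)).2]
      have h1 : (p : ℚ) ^ steps0 σ a β ≤ (p : ℚ) ^ (steps σ β' β + steps0 σ a β') :=
        pow_le_pow_right₀ hp1 hle
      have h2 : epsT σ T β * (p : ℚ) ^ steps0 σ a β ≤ 1 * (p : ℚ) ^ steps0 σ a β :=
        mul_le_mul_of_nonneg_right eps_le (pow_nonneg hp0 _)
      rw [pow_add] at h1
      linarith
    · rw [xB0 h ho, xB0 h]
      · simp
      · intro hc; exact ho (so_trans hc (so_symm hs))

lemma nn_spec {B : Type*} [Finite B] {σ : Equiv.Perm B} {T : Set B} {a : B}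
    (h : ¬ orbit σ a ⊆ tilde σ T) :
    0 < nn σ T a ∧ (σ ^ nn σ T a) a ∉ tilde σ T ∧
      ∀ i, 0 < i → i < nn σ T a → (σ ^ i) a ∈ tilde σ T := by
  have hne : {i : ℕ | 0 < i ∧ (σ ^ i) a ∉ tilde σ T}.Nonempty := by
    rw [Set.not_subset] at h
    obtain ⟨b, hb, hbT⟩ := h
    obtain ⟨n, hn, rfl⟩ := so_pos hb
    exact ⟨n, hn, hbT⟩
  refine ⟨(Nat.sInf_mem hne).1, (Nat.sInf_mem hne).2, ?_⟩
  intro i hi hlt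
  by_contra hc
  exact absurd (Nat.sInf_le (s := {i : ℕ | 0 < i ∧ (σ ^ i) a ∉ tilde σ T}) ⟨hi, hc⟩)
    (not_le.2 hlt)

lemma not_tilde {B : Type*} {σ : Equiv.Perm B} {T : Set B} {a : B} (h : a ∉ tilde σ T) :
    a ∉ T := fun h' => h (Or.inl h')

/-- no wrap-around. -/
lemma nowrap {B : Type*} [Finite B] {σ : Equiv.Perm B} {T : Set B} {τ β : B}
    (hτ : τ ∉ tilde σ T) (hβ : β ∉ T) (hne : β ≠ τ) (hn : ¬ orbit σ β ⊆ tilde σ T) (j : ℕ)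
    (hj : 0 < j) (hj2 : j ≤ nn σ T β) : (σ ^ j) β ≠ (σ ^ mu σ T τ) τ := by
  intro he
  obtain ⟨m1, m2, m3⟩ := mu_spec (nonfull σ (not_tilde hτ))
  obtain ⟨n1, n2, n3⟩ := nn_spec hn
  rcases lt_trichotomy j (mu σ T τ) with h | h | h
  · have := pw_cancel σ h.le he
    apply hβ
    rw [this]
    exact m3 _ (by omega) (by omega)
  · rw [h] at he
    exact hne ((σ ^ _).injective he)
  · have := pw_cancel σ h.le he.symm
    apply hτ
    rw [this]
    exact n3 _ (by omega) (by omega)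

lemma L_g_ne {B : Type*} [Finite B] [DecidableEq B] {σ : Equiv.Perm B} {p : ℕ}
    {T : Set B} {τ β : B} (h' : τ ∉ T) (hne : β ≠ τ) :
    LTL σ p T τ (gvec σ p T β) = 0 := by
  rw [gvec]
  split_ifs with h1 h2 h3
  · exact L_b h' h1
  · rw [map_neg]
    by_cases h : τ ∈ tilde σ T
    · rw [xA_zero h h' h1 hne]; simp
    · rw [xB0 h]; · simp
      intro ho; exact h (h2 (so_symm ho))
  all_goals
    obtain ⟨n1, n2, n3⟩ := nn_spec h2
    by_cases h : τ ∈ tilde σ T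
    · have hne2 : (σ ^ nn σ T β) β ≠ τ := by
        intro hc; rw [hc] at n2; exact n2 h
      simp [fB, fH, xA_zero h h' h1 hne, xA_zero h h' (not_tilde n2) hne2]
    · by_cases ho : sameOrbit σ τ β
      · have ho2 := so_trans ho (so_pow σ (nn σ T β) β)
        have hst := steps0_add (so_trans (so_symm (so_pow σ (mu σ T τ) τ)) ho) (nn σ T β)
          (nowrap h h1 hne h2)
        simp only [fB, fH, map_neg, map_add, map_smul, xB h ho, xB h ho2, hst, smul_eq_mul,
          eps_notmem n2]
        first
        | rw [eps_td h3 h1]; ring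
        | rw [eps_notmem h3]; ring
      · have ho2 : ¬ sameOrbit σ τ ((σ ^ nn σ T β) β) :=
          fun hc => ho (so_trans hc (so_symm (so_pow _ _ _)))
        simp [fB, fH, xB0 h ho, xB0 h ho2]

lemma L_g_pos {B : Type*} [Finite B] [DecidableEq B] {σ : Equiv.Perm B} {p : ℕ} (hp : 1 < p)
    {T : Set B} {τ : B} (h' : τ ∉ T) :
    0 < LTL σ p T τ (gvec σ p T τ) := by
  have hp0 : (0 : ℚ) < p := by exact_mod_cast (by omega : 0 < p)
  have hp1 : (1 : ℚ) < p := by exact_mod_cast hp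
  rw [gvec, if_neg h']
  split_ifs with h2 h3
  · rw [map_neg, xA_self (h2 (so_refl _ _)) h']; norm_num
  all_goals obtain ⟨n1, n2, n3⟩ := nn_spec h2
  · have hne2 : (σ ^ nn σ T τ) τ ≠ τ := by
      intro hc; rw [hc] at n2; exact n2 h3
    simp only [fB, map_neg, map_add, map_smul, xA_self h3 h', xA_zero h3 h' (not_tilde n2) hne2]
    have := pow_pos hp0 (nn σ T τ)
    simpa
  · obtain ⟨m1, m2, m3⟩ := mu_spec (nonfull σ h')
    simp only [fH, map_neg, map_add, map_smul, xB h3 (so_refl σ τ), xB h3 (so_pow σ (nn σ T τ) τ),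
      eps_notmem n2, eps_notmem h3, smul_eq_mul, one_mul]
    have hmn : mu σ T τ ≤ nn σ T τ := mu_le n1 (not_tilde n2)
    have : steps0 σ ((σ ^ mu σ T τ) τ) ((σ ^ nn σ T τ) τ) ≤ nn σ T τ - mu σ T τ := by
      apply steps0_le
      rw [pw, Nat.sub_add_cancel hmn]
    have h5 := pow_lt_pow_right₀ hp1 (show steps0 σ ((σ ^ mu σ T τ) τ) ((σ ^ nn σ T τ) τ) <
      nn σ T τ + steps0 σ ((σ ^ mu σ T τ) τ) τ by omega)
    rw [pow_add] at h5
    linarith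

end GO

namespace GO

lemma cone_gen {V : Type*} [AddCommMonoid V] [Module ℚ V] {S : Set V} {v : V} (h : v ∈ S) :
    v ∈ cone S := ⟨1, fun _ => 1, fun _ => v, fun _ => zero_le_one, fun _ => h, by simp⟩

lemma cone_zero {V : Type*} [AddCommMonoid V] [Module ℚ V] {S : Set V} :
    (0 : V) ∈ cone S :=
  ⟨0, fun _ => 0, fun _ => 0, fun _ => le_rfl, fun i => i.elim0, by simp⟩

lemma cone_add {V : Type*} [AddCommMonoid V] [Module ℚ V] {S : Set V} {v w : V}
    (hv : v ∈ cone S) (hw : w ∈ cone S) : v + w ∈ cone S := by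
  obtain ⟨n, c, x, h1, h2, rfl⟩ := hv
  obtain ⟨m, d, y, h3, h4, rfl⟩ := hw
  refine ⟨n + m, Fin.append c d, Fin.append x y, ?_, ?_, ?_⟩
  · intro i
    refine Fin.addCases (fun i => ?_) (fun i => ?_) i
    · simpa using h1 i
    · simpa using h3 i
  · intro i
    refine Fin.addCases (fun i => ?_) (fun i => ?_) i
    · simpa using h2 i
    · simpa using h4 i
  · rw [Fin.sum_univ_add]; simp

lemma cone_smul {V : Type*} [AddCommMonoid V] [Module ℚ V] {S : Set V} {v : V} {a : ℚ}
    (ha : 0 ≤ a) (hv : v ∈ cone S) : a • v ∈ cone S := by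
  obtain ⟨n, c, x, h1, h2, rfl⟩ := hv
  refine ⟨n, fun i => a * c i, x, fun i => mul_nonneg ha (h1 i), h2, ?_⟩
  rw [Finset.smul_sum]
  simp [mul_smul]

lemma cone_sum {V : Type*} [AddCommMonoid V] [Module ℚ V] {S : Set V} {ι : Type*}
    (s : Finset ι) (f : ι → V) (h : ∀ i ∈ s, f i ∈ cone S) : ∑ i ∈ s, f i ∈ cone S := by
  classical
  induction s using Finset.induction_on with
  | empty => simpa using cone_zero
  | insert a s ha ih =>
    rw [Finset.sum_insert ha]
    exact cone_add (h a (by simp)) (ih (fun i hi => h i (by simp [hi])))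

lemma b_mem {B : Type*} [DecidableEq B] {σ : Equiv.Perm B} {p : ℕ} {T : Set B} {β : B}
    (h : β ∈ T) (c : ℚ) : c • bsimple σ p β ∈ D σ p T := by
  rcases le_total 0 c with hc | hc
  · exact cone_smul hc (cone_gen (Or.inr ⟨β, h, Or.inl rfl⟩))
  · have := cone_smul (neg_nonneg.2 hc) (cone_gen (S := Dgen σ p T) (Or.inr ⟨β, h, Or.inr rfl⟩))
    simpa [D] using this

/-- `-(e_{σ^n β} + p^n e_β) ∈ D`, using `steps`. -/
lemma fB_mem {B : Type*} [Finite B] [DecidableEq B] {σ : Equiv.Perm B} {p : ℕ} {T : Set B} {β γ : B}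
    (h : β ∈ tilde σ T) (h' : β ∉ T) (hγ : γ ∉ T) (n : ℕ) (hn : 0 < n)
    (hs : steps σ (σ β) γ = n) (hso : sameOrbit σ γ (σ β)) :
    -(e γ + ((p : ℚ) ^ (n + 1)) • e β) ∈ D σ p T := by
  have h1 : hvec σ p γ (σ β) ∈ D σ p T :=
    cone_gen (Or.inl ⟨γ, σ β, hγ, Or.inr ⟨β, ⟨h, h'⟩, rfl⟩, hso, rfl⟩)
  have h2 := b_mem (σ := σ) (p := p) (td_succ h h') (-(p : ℚ) ^ n)
  have h3 := cone_add h1 h2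
  have h4 : σ⁻¹ (σ β) = β := by simp
  have h5 : -(e γ + ((p : ℚ) ^ (n + 1)) • e β) =
      hvec σ p γ (σ β) + (-(p : ℚ) ^ n) • bsimple σ p (σ β) := by
    rw [hvec, hs, bsimple, h4]
    ext x
    simp only [Pi.neg_apply, Pi.add_apply, Pi.smul_apply, smul_eq_mul]
    ring
  rw [h5]
  exact h3

lemma g_mem {B : Type*} [Finite B] [DecidableEq B] {σ : Equiv.Perm B} {p : ℕ} {T : Set B} {β : B}
    (h' : β ∉ T) : gvec σ p T β ∈ D σ p T := by
  rw [gvec, if_neg h']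
  obtain ⟨m1, m2, m3⟩ := mu_spec (nonfull σ h')
  have hso1 : sameOrbit σ β (σ β) := ⟨1, by simp⟩
  split_ifs with h2 h3
  · have ht := h2 (so_refl _ _)
    have h5 := fB_mem (p := p) ht h' h' _ (steps_spec (so_symm hso1)).1 rfl hso1
    have hpos : (0 : ℚ) < 1 + (p : ℚ) ^ (steps σ (σ β) β + 1) := by positivity
    have h6 := cone_smul (inv_nonneg.2 hpos.le) h5
    have h7 : -(e β) = (1 + (p : ℚ) ^ (steps σ (σ β) β + 1))⁻¹ •
        -(e β + ((p : ℚ) ^ (steps σ (σ β) β + 1)) • e β) := by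
      ext x
      simp only [Pi.neg_apply, Pi.add_apply, Pi.smul_apply, smul_eq_mul]
      field_simp
      try ring
    rw [h7]
    exact h6
  · obtain ⟨n1, n2, n3⟩ := nn_spec h2
    have hn : 1 < nn σ T β := by
      by_contra hc
      have : nn σ T β = 1 := by omega
      rw [this] at n2
      exact n2 (Or.inl (by simpa using td_succ h3 h'))
    have hst : steps σ (σ β) ((σ ^ nn σ T β) β) = nn σ T β - 1 := by
      have hs := steps_spec (so_trans (so_symm hso1) (so_pow σ (nn σ T β) β))
      have hle : steps σ (σ β) ((σ ^ nn σ T β) β) ≤ nn σ T β - 1 := by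
        apply steps_le (by omega)
        rw [pw1']; congr 2; omega
      apply le_antisymm hle
      by_contra hlt
      rw [pw1'] at hs
      apply n2
      rw [← hs.2]
      exact n3 _ (by omega) (by omega)
    have := fB_mem (p := p) h3 h' (not_tilde n2) _ (by omega) hst
      (so_trans (so_symm (so_pow _ _ _)) hso1)
    rwa [Nat.sub_add_cancel n1] at this
  · obtain ⟨n1, n2, n3⟩ := nn_spec h2
    have hst : steps σ β ((σ ^ nn σ T β) β) = nn σ T β := by
      have hs := steps_spec (so_pow σ (nn σ T β) β)
      apply le_antisymm (steps_le n1 rfl)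
      by_contra hlt
      apply n2
      rw [← hs.2]
      exact n3 _ hs.1 (by omega)
    refine cone_gen (Or.inl ⟨(σ ^ nn σ T β) β, β, not_tilde n2, Or.inl h3,
      so_symm (so_pow _ _ _), ?_⟩)
    rw [fH, hvec, hst]

lemma g_span {B : Type*} [Fintype B] [DecidableEq B] {σ : Equiv.Perm B} {p : ℕ} (hp : 1 < p)
    {T : Set B} : Submodule.span ℚ (Set.range (gvec σ p T)) = ⊤ := by
  have hp0 : (0 : ℚ) < p := by exact_mod_cast (by omega : 0 < p)
  have hp1 : (1 : ℚ) < p := by exact_mod_cast hp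
  by_contra hne
  obtain ⟨f, hf0, hf⟩ := Submodule.exists_le_ker_of_lt_top _ (lt_top_iff_ne_top.2 hne)
  have hg : ∀ β, f (gvec σ p T β) = 0 := fun β =>
    hf (Submodule.subset_span ⟨β, rfl⟩)
  -- zero off T
  have h1 : ∀ β, β ∉ T → f (e β) = 0 := by
    by_contra hc
    push Not at hc
    obtain ⟨β₀, hβ₀, hx⟩ := hc
    obtain ⟨β, hβ, hmax⟩ := Finset.exists_max_image (Finset.univ.filter (· ∉ T))
      (fun β => |f (e β)|) ⟨β₀, by simpa using hβ₀⟩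
    simp only [Finset.mem_filter, Finset.mem_univ, true_and] at hβ hmax
    have hpos : 0 < |f (e β)| := lt_of_lt_of_le (abs_pos.2 hx) (hmax _ hβ₀)
    have hgβ := hg β
    rw [gvec, if_neg hβ] at hgβ
    split_ifs at hgβ with h2 h3
    · simp at hgβ; simp [hgβ] at hpos
    all_goals
      obtain ⟨n1, n2, n3⟩ := nn_spec h2
      have hab : |f (e ((σ ^ nn σ T β) β))| = (p : ℚ) ^ nn σ T β * |f (e β)| := by
        simp only [fB, fH, map_neg, map_add, map_smul, smul_eq_mul] at hgβ
        have habs := abs_of_pos (pow_pos hp0 (nn σ T β))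
        first
        | rw [show f (e ((σ ^ nn σ T β) β)) = -((p : ℚ) ^ nn σ T β * f (e β)) by linarith,
            abs_neg, abs_mul, habs]
        | rw [show f (e ((σ ^ nn σ T β) β)) = ((p : ℚ) ^ nn σ T β * f (e β)) by linarith,
            abs_mul, habs]
      have hm := hmax _ (not_tilde n2)
      rw [hab] at hm
      have : 1 < (p : ℚ) ^ nn σ T β := one_lt_pow₀ hp1 (by omega)
      nlinarith
  have h2 : ∀ β, f (e β) = 0 := by
    by_contra hc
    push Not at hc
    obtain ⟨β₀, hx⟩ := hc
    obtain ⟨β, hβ, hmin⟩ := Finset.exists_min_image (Finset.univ.filter (fun β => f (e β) ≠ 0))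
      (fun β => |f (e β)|) ⟨β₀, by simpa using hx⟩
    simp only [Finset.mem_filter, Finset.mem_univ, true_and] at hβ hmin
    have hT : β ∈ T := by
      by_contra hc; exact hβ (h1 β hc)
    have hgβ := hg β
    rw [gvec, if_pos hT, bsimple, map_add, map_smul, smul_eq_mul] at hgβ
    have hn : f (e (σ⁻¹ β)) ≠ 0 := by
      intro h0; rw [h0] at hgβ; apply hβ; linarith
    have hm := hmin _ hn
    rw [show f (e β) = -((p : ℚ) * f (e (σ⁻¹ β))) by linarith, abs_neg, abs_mul,
      abs_of_pos hp0] at hm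
    have := abs_pos.2 hn
    nlinarith
  apply hf0
  apply LinearMap.pi_ext'
  intro β
  ext
  have : (Pi.single β (1 : ℚ)) = e β := by
    ext x; simp [e, Pi.single_apply]
  simp [this, h2]

theorem D_eq {B : Type*} [Fintype B] [DecidableEq B] {σ : Equiv.Perm B} {p : ℕ} (hp : 1 < p)
    {T : Set B} : D σ p T = {κ | ∀ τ, τ ∉ T → 0 ≤ LT σ p T τ κ} := by
  ext κ
  constructor
  · rintro ⟨n, c, v, hc, hv, rfl⟩ τ hτ
    rw [← LTL_apply, map_sum]
    apply Finset.sum_nonneg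
    intro i _
    rw [map_smul, smul_eq_mul]
    apply mul_nonneg (hc i)
    rcases hv i with ⟨β, β', h1, h2, h3, h4⟩ | ⟨β, h1, h4 | h4⟩
    · rw [h4]; exact L_h hp hτ h1 h2 h3
    · rw [h4, L_b hτ h1]
    · rw [h4, map_neg, L_b hτ h1]; simp
  · intro h
    have hmem : κ ∈ Submodule.span ℚ (Set.range (gvec σ p T)) := by
      rw [g_span hp]; trivial
    rw [Submodule.mem_span_range_iff_exists_fun] at hmem
    obtain ⟨c, rfl⟩ := hmem
    apply cone_sum
    intro τ _
    by_cases hτ : τ ∈ T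
    · have := b_mem (σ := σ) (p := p) hτ (c τ)
      rwa [gvec, if_pos hτ]
    · have h1 := h τ hτ
      rw [← LTL_apply, map_sum, Finset.sum_eq_single τ] at h1
      · rw [map_smul, smul_eq_mul] at h1
        exact cone_smul (nonneg_of_mul_nonneg_left h1 (L_g_pos hp hτ)) (g_mem hτ)
      · intro b _ hb
        rw [map_smul, L_g_ne hτ hb]; simp
      · simp

end GO

namespace GO

theorem part1 {B : Type*} [Finite B] [DecidableEq B]
    (σ : Equiv.Perm B) (p : ℕ) (T : Set B) (β : B)
    (hβ : β ∈ GO.BT σ T)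
    (hempty : {τ : B | ∃ i, 0 < i ∧ i < GO.nn σ T β ∧ τ = (σ ^ i) β}
        ∩ (GO.tilde σ T \ T) = ∅) :
    (∀ τ, τ ∉ T ∪ {(σ ^ GO.nn σ T β) β} →
      ∀ κ : B → ℚ, GO.LTf σ p T β τ κ = GO.LT σ p (T ∪ {(σ ^ GO.nn σ T β) β}) τ κ) := by
  obtain ⟨hβT, hne, hns⟩ := hβ
  have hnf : ¬ orbit σ β ⊆ tilde σ T := by
    obtain ⟨x, hx, hx2⟩ := hne
    exact fun hc => hx2 (hc hx)
  obtain ⟨n1, n2, n3⟩ := nn_spec hnf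
  have n3' : ∀ i, 0 < i → i < nn σ T β → (σ ^ i) β ∈ T := by
    intro i h1 h2
    by_contra hc
    have : (σ ^ i) β ∈ ({τ : B | ∃ i, 0 < i ∧ i < GO.nn σ T β ∧ τ = (σ ^ i) β}
        ∩ (GO.tilde σ T \ T)) := ⟨⟨i, h1, h2, rfl⟩, n3 i h1 h2, hc⟩
    rw [hempty] at this
    exact this
  have hmn : mu σ T β = nn σ T β := mu_eq n1 (not_tilde n2) n3'
  unfold LTf
  clear hempty
  rw [← hmn] at n1 n2 n3 n3' ⊢
  set N := mu σ T β with hN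
  set b := (σ ^ N) β with hb
  set T' := T ∪ {b} with hT'
  have hbT : b ∉ T := not_tilde n2
  have hbβ : b ≠ β := by
    intro hc
    apply hns
    ext x
    constructor
    · rintro ⟨hx, hx2⟩
      by_contra hxb
      obtain ⟨k, hk⟩ := hx
      -- reduce k modulo N
      have hper : ∀ q r, (σ ^ (N * q + r)) β = (σ ^ r) β := by
        intro q r
        induction q with
        | zero => simp
        | succ q ih =>
          rw [show N * (q + 1) + r = (N * q + r) + N by ring, ← pw, ← hb, hc, ih]
      have := hper (k / N) (k % N)
      rw [Nat.div_add_mod, hk] at this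
      have hlt := Nat.mod_lt k n1
      rcases Nat.eq_zero_or_pos (k % N) with h0 | h0
      · rw [h0] at this; exact hxb this
      · rw [this] at hx2
        exact hx2 (n3 _ h0 hlt)
    · rintro rfl
      exact ⟨so_refl _ _, hc ▸ n2⟩
  have hβT' : β ∉ T' := by
    rintro (h | h)
    · exact hβT h
    · exact hbβ h.symm
  obtain ⟨m1, m2, m3⟩ := mu_spec (nonfull σ hbT)
  -- the element after `b`
  have hcb : (σ ^ mu σ T b) b ≠ b := by
    intro hc
    have hso : sameOrbit σ b β := so_symm (so_pow σ N β)
    obtain ⟨k, hk⟩ := hso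
    have hper : ∀ q r, (σ ^ (mu σ T b * q + r)) b = (σ ^ r) b := by
      intro q r
      induction q with
      | zero => simp
      | succ q ih =>
        rw [show mu σ T b * (q + 1) + r = (mu σ T b * q + r) + mu σ T b by ring, ← pw, hc, ih]
    have := hper (k / mu σ T b) (k % mu σ T b)
    rw [Nat.div_add_mod, hk] at this
    have hlt := Nat.mod_lt k m1
    rcases Nat.eq_zero_or_pos (k % mu σ T b) with h0 | h0
    · rw [h0] at this; exact hbβ this.symm
    · rw [this] at hβT
      exact hβT (m3 _ h0 hlt)
  have hodd : Odd (mu σ T b) := by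
    rw [← Nat.not_even_iff_odd]
    intro hc; exact n2 (mem_tilde.2 (Or.inr hc))
  -- mu for T'
  have hmu1 : ∀ i < N, mu σ T' ((σ ^ i) β) = mu σ T ((σ ^ i) β) + mu σ T b := by
    intro i hi
    have hmi : mu σ T ((σ ^ i) β) = N - i := by
      apply mu_eq (by omega)
      · rw [pw, Nat.sub_add_cancel hi.le]; exact hbT
      · intro j h1 h2
        rw [pw]; exact n3' _ (by omega) (by omega)
    have hstep : ∀ j, (σ ^ (N - i + j)) ((σ ^ i) β) = (σ ^ j) b := by
      intro j
      rw [hb, pw, pw]; congr 2; omega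
    rw [hmi]
    apply mu_eq (by omega)
    · rw [hstep]
      rintro (h | h)
      · exact m2 h
      · exact hcb h
    · intro j h1 h2
      rcases lt_trichotomy j (N - i) with h | h | h
      · left; rw [pw]; exact n3' _ (by omega) (by omega)
      · right; rw [h]; exact hstep 0
      · left
        obtain ⟨k, rfl⟩ : ∃ k, j = N - i + k := ⟨j - (N - i), by omega⟩
        rw [hstep]; exact m3 k (by omega) (by omega)
  have hnf' : ∀ x, ¬ orbit σ x ⊆ T → ¬ orbit σ x ⊆ T' := by
    intro x hx hc
    by_cases hso : sameOrbit σ x β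
    · exact hβT' (hc hso)
    · apply hx
      intro y hy
      rcases hc hy with h | h
      · exact h
      · exfalso
        apply hso
        have : y = b := h
        rw [this] at hy
        exact so_trans hy (so_symm (so_pow _ _ _))
  have hmu2 : ∀ x, ¬ orbit σ x ⊆ T → (¬ ∃ i < N, x = (σ ^ i) β) → mu σ T' x = mu σ T x := by
    intro x hx hxn
    obtain ⟨k1, k2, k3⟩ := mu_spec hx
    apply mu_eq k1
    · rintro (h | h)
      · exact k2 h
      · have h : (σ ^ mu σ T x) x = b := h
        rcases le_or_gt (mu σ T x) N with h5 | h5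
        · have := pw_cancel σ h5 (h.trans hb)
          exact hxn ⟨_, by omega, this⟩
        · have := pw_cancel σ h5.le (h.trans hb).symm
          apply hβT; rw [this]
          exact k3 _ (by omega) (by omega)
    · intro i h1 h2
      exact Or.inl (k3 i h1 h2)
  have hfull : ∀ x, orbit σ x ⊆ T ↔ orbit σ x ⊆ T' :=
    fun x => ⟨fun h => h.trans Set.subset_union_left, fun h => by
      by_contra hc; exact hnf' x hc h⟩
  have heps : epsTf σ T β = epsT σ T' := by
    ext x
    rw [epsTf]
    by_cases hx : orbit σ x ⊆ T
    · rw [eps_full hx, eps_full ((hfull x).1 hx)]; simp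
    · rw [eps_nonfull hx, eps_nonfull (hnf' x hx), ← hN]
      split_ifs with hc
      · obtain ⟨i, hi, rfl⟩ := hc
        rw [hmu1 i hi, pow_add, hodd.neg_one_pow]; ring
      · rw [hmu2 x hx hc]
  have hβmu : mu σ T' β = N + mu σ T b := hmu1 0 n1
  have htβ : β ∈ tilde σ T' ↔ β ∉ tilde σ T := by
    rw [mem_tilde, mem_tilde, hβmu, ← hN]
    simp only [hβT', hβT, false_or]
    rw [Nat.even_add]
    have : ¬ Even (mu σ T b) := Nat.not_even_iff_odd.2 hodd
    tauto
  intro τ hτ κ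
  have hτT : τ ∉ T := fun h => hτ (Or.inl h)
  rw [heps]
  unfold LT
  by_cases hτβ : τ = β
  · subst hτβ
    rw [if_pos rfl]
    have hpow : (σ ^ (N + mu σ T b)) τ = (σ ^ mu σ T b) b := by
      rw [hb, pw, add_comm]
    by_cases h : τ ∈ tilde σ T
    · rw [if_pos h, if_neg (fun hc => htβ.1 hc h), hβmu, hpow]
    · rw [if_neg h, if_pos (htβ.2 h), hβmu]
      congr 1
      rw [Equiv.Perm.inv_eq_iff_eq, pw1, ← hpow]
      congr 2; omega
  · have hxn : ∀ j < mu σ T τ, ¬ ∃ i < N, (σ ^ j) τ = (σ ^ i) β := by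
      rintro j hj ⟨i, hi, he⟩
      obtain ⟨k1, k2, k3⟩ := mu_spec (nonfull σ hτT)
      rcases lt_trichotomy i j with h | h | h
      · have := pw_cancel σ h.le he.symm
        apply hβT; rw [this]; exact k3 _ (by omega) (by omega)
      · subst h
        exact hτβ ((σ ^ i).injective he)
      · have := pw_cancel σ h.le he
        apply hτT; rw [this]; exact n3' _ (by omega) (by omega)
    have hpos := (mu_spec (nonfull σ hτT)).1
    have hmuτ : mu σ T' τ = mu σ T τ := hmu2 τ (nonfull σ hτT) (hxn 0 hpos)
    have ht : τ ∈ tilde σ T' ↔ τ ∈ tilde σ T := by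
      rw [mem_tilde, mem_tilde, hmuτ]
      simp only [hτ, hτT]
    rw [if_neg hτβ, hmuτ]
    by_cases h : τ ∈ tilde σ T
    · rw [if_pos h, if_pos h, if_pos (ht.2 h), Lfun, Lfun]
      apply Finset.sum_congr rfl
      intro j hj
      rw [stepsA hτT, Finset.mem_range] at hj
      rw [← heps, epsTf, if_neg]
      exact hxn j (by omega)
    · rw [if_neg h, if_neg (fun hc => h (ht.1 hc))]

end GO

/-- let `β ∈ 𝔹(T)` with `{σ^iβ : 0 < i < n_β} ∩ (T̃ − T) = ∅`, and set
`T⁺ = T ∪ {σ^{n_β}β}`.  Then `L_{T,f_β,τ} = L_{T⁺,τ}` for every `τ ∈ 𝔹 − T⁺`, and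
consequently `𝒟_{T,f_β} = 𝒟_{T⁺}`. -/
theorem statement17 {B : Type*} [Fintype B] [DecidableEq B] [Nonempty B]
    (σ : Equiv.Perm B) (p : ℕ) (hp : p.Prime) (T : Set B) (β : B)
    (hβ : β ∈ GO.BT σ T)
    (hempty : {τ : B | ∃ i, 0 < i ∧ i < GO.nn σ T β ∧ τ = (σ ^ i) β}
        ∩ (GO.tilde σ T \ T) = ∅) :
    (∀ τ, τ ∉ T ∪ {(σ ^ GO.nn σ T β) β} →
      ∀ κ : B → ℚ, GO.LTf σ p T β τ κ = GO.LT σ p (T ∪ {(σ ^ GO.nn σ T β) β}) τ κ) ∧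
    GO.Df σ p T β = GO.D σ p (T ∪ {(σ ^ GO.nn σ T β) β}) := by
  have h1 := GO.part1 σ p T β hβ hempty
  refine ⟨h1, ?_⟩
  rw [GO.D_eq hp.one_lt]
  ext κ
  constructor
  · intro h τ hτ
    rw [← h1 τ hτ]
    exact h τ (fun hc => hτ (Or.inl hc)) (fun hc => hτ (Or.inr hc))
  · intro h τ hτ hτ2
    have hτ3 : τ ∉ T ∪ {(σ ^ GO.nn σ T β) β} := by
      rintro (hc | hc)
      · exact hτ hc
      · exact hτ2 hc
    rw [h1 τ hτ3]
    exact h τ hτ3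
end

section
/- The family {h_β : β ∈ 𝔹} is linearly independent over ℚ (so it is a basis of ℚ^𝔹), and the quotient of ℤ^𝔹 by the subgroup generated by {h_β : β ∈ 𝔹} is a finite abelian group of order ∏_𝔭 (p^{|𝔹_𝔭|} − 1), the product taken over the orbits 𝔹_𝔭 of σ. -/
/- Setting: `B` is the finite nonempty set 𝔹 equipped with a permutation `σ` (Frobenius),
and `p` is a prime.  Weights live in `ℚ^𝔹 = (B → ℚ)`.  The orbits `𝔹_𝔭` of `σ` are the sets
`orbit σ β`, and for `T ⊆ 𝔹` we have `T_𝔭 = T ∩ orbit σ β`. -/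

open scoped Classical

namespace GO

section S18
variable {B : Type*} [Fintype B] [DecidableEq B]

lemma s18_inv (σ : Equiv.Perm B) (β : B) : σ⁻¹ (σ β) = β := σ.symm_apply_apply β

lemma s18_sum_smul {A : Type*} [AddCommGroup A] (g : B → ℤ) (x : A) :
    (∑ i, g i) • x = ∑ i, g i • x := Finset.sum_smul

lemma s18_mem_self (σ : Equiv.Perm B) (β : B) : β ∈ orbit σ β := ⟨0, rfl⟩

lemma s18_orbit_apply (σ : Equiv.Perm B) (β : B) : orbit σ (σ β) = orbit σ β := by
  ext τ
  constructor
  · rintro ⟨n, hn⟩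
    exact ⟨n + 1, by rw [pow_succ]; exact hn⟩
  · rintro ⟨n, hn⟩
    refine ⟨n + (orderOf σ - 1), ?_⟩
    have h1 : 0 < orderOf σ := orderOf_pos σ
    rw [← hn, ← Equiv.Perm.mul_apply, ← pow_succ]
    rw [show n + (orderOf σ - 1) + 1 = n + orderOf σ by omega, pow_add, pow_orderOf_eq_one, mul_one]

lemma s18_ncard (σ : Equiv.Perm B) (β : B) :
    (orbit σ β).ncard = Function.minimalPeriod σ β := by
  have hp : 0 < Function.minimalPeriod σ β := by
    apply Function.IsPeriodicPt.minimalPeriod_pos (orderOf_pos σ)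
    unfold Function.IsPeriodicPt Function.IsFixedPt
    rw [Equiv.Perm.iterate_eq_pow, pow_orderOf_eq_one]; rfl
  have : orbit σ β = (fun n => (σ ^ n) β) '' (Finset.range (Function.minimalPeriod σ β)) := by
    ext τ
    constructor
    · rintro ⟨n, hn⟩
      refine ⟨n % Function.minimalPeriod σ β, by simpa using Nat.mod_lt _ hp, ?_⟩
      simp only
      rw [← hn, ← Equiv.Perm.iterate_eq_pow, ← Equiv.Perm.iterate_eq_pow,
        Function.iterate_mod_minimalPeriod_eq]
    · rintro ⟨n, _, hn⟩
      exact ⟨n, hn⟩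
  rw [this, Set.ncard_image_of_injOn, Set.ncard_coe_finset, Finset.card_range]
  intro a ha b hb hab
  simp only [← Equiv.Perm.iterate_eq_pow] at hab
  exact (Function.iterate_eq_iterate_iff_of_lt_minimalPeriod (by simpa using ha)
    (by simpa using hb)).1 hab

lemma s18_period (σ : Equiv.Perm B) (β : B) (k : ℕ) :
    (σ ^ k) β = β ↔ (orbit σ β).ncard ∣ k := by
  rw [s18_ncard, ← Function.isPeriodicPt_iff_minimalPeriod_dvd]
  unfold Function.IsPeriodicPt Function.IsFixedPt
  rw [Equiv.Perm.iterate_eq_pow]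

lemma s18_pow_one (p n : ℕ) (hp : 0 < p) : ((p : ZMod (p ^ n - 1))) ^ n = 1 := by
  have h : ((p ^ n - 1 : ℕ) : ZMod (p ^ n - 1)) = 0 := ZMod.natCast_self _
  rw [Nat.cast_sub (Nat.one_le_pow _ _ hp)] at h
  push_cast at h
  exact sub_eq_zero.1 h

lemma s18_pow_eq_le (σ : Equiv.Perm B) (p : ℕ) (hp : 0 < p) (r : B) (a b : ℕ) (hab : a ≤ b)
    (h : (σ ^ a) r = (σ ^ b) r) :
    ((p : ZMod (p ^ (orbit σ r).ncard - 1))) ^ a = p ^ b := by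
  obtain ⟨c, rfl⟩ := Nat.exists_eq_add_of_le hab
  rw [pow_add, Equiv.Perm.mul_apply] at h
  have h2 := (s18_period σ r c).1 ((σ ^ a).injective h).symm
  obtain ⟨m, hm⟩ := h2
  generalize (orbit σ r).ncard = n at *
  rw [pow_add, hm, pow_mul, s18_pow_one p n hp, one_pow, mul_one]

lemma s18_pow_eq (σ : Equiv.Perm B) (p : ℕ) (hp : 0 < p) (r : B) (a b : ℕ)
    (h : (σ ^ a) r = (σ ^ b) r) :
    ((p : ZMod (p ^ (orbit σ r).ncard - 1))) ^ a = p ^ b := by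
  rcases le_total a b with hab | hab
  · exact s18_pow_eq_le σ p hp r a b hab h
  · exact (s18_pow_eq_le σ p hp r b a hab h.symm).symm

lemma s18_hZ (σ : Equiv.Perm B) (p : ℕ) (β : B) :
    hZ σ p β = -Pi.single β 1 + (p : ℤ) • Pi.single (σ⁻¹ β) 1 := by
  ext τ
  simp only [hZ, Pi.add_apply, Pi.neg_apply, Pi.smul_apply, Pi.single_apply, smul_eq_mul]
  split_ifs <;> simp

lemma s18_linInd (σ : Equiv.Perm B) (p : ℕ) (hp : p.Prime) :
    LinearIndependent ℚ (fun β : B => hsimple σ p β) := by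
  rw [Fintype.linearIndependent_iff]
  intro c hc
  have key : ∀ τ, c τ = p * c (σ τ) := by
    intro τ
    have := congrFun hc τ
    have e1 : ∀ β, τ = σ⁻¹ β ↔ β = σ τ := fun β => by
      rw [Equiv.Perm.eq_inv_iff_eq]; exact eq_comm
    simp only [Finset.sum_apply, Pi.smul_apply, hsimple, Pi.add_apply, Pi.neg_apply, e,
      smul_eq_mul, mul_add, Finset.sum_add_distrib, Pi.zero_apply, e1] at this
    simp at this
    linarith
  have key2 : ∀ n : ℕ, ∀ τ, c τ = p ^ n * c ((σ ^ n) τ) := by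
    intro n
    induction n with
    | zero => intro τ; simp
    | succ n ih =>
      intro τ
      rw [key τ, ih (σ τ), pow_succ, pow_succ, Equiv.Perm.mul_apply]; ring
  intro τ
  have h := key2 (orderOf σ) τ
  rw [pow_orderOf_eq_one] at h
  have h1 : (1 : ℚ) < (p : ℚ) ^ orderOf σ :=
    one_lt_pow₀ (by exact_mod_cast hp.one_lt) (orderOf_pos σ).ne'
  simp only [Equiv.Perm.coe_one, id] at h
  have : ((p : ℚ) ^ orderOf σ - 1) * c τ = 0 := by linarith
  rcases mul_eq_zero.1 this with h | h
  · linarith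
  · exact h

lemma s18_card (σ : Equiv.Perm B) (p : ℕ) (hp : p.Prime) :
    Nat.card ((B → ℤ) ⧸ AddSubgroup.closure (Set.range (hZ σ p)))
      = ∏ O ∈ Finset.univ.image (fun β : B => orbit σ β), (p ^ O.ncard - 1) := by
  have hp0 := hp.pos
  let I := {O // O ∈ Finset.univ.image (fun β : B => orbit σ β)}
  let q : B → I := fun β => ⟨orbit σ β, Finset.mem_image_of_mem _ (Finset.mem_univ _)⟩
  have hr : ∀ O : I, ∃ r : B, q r = O := by
    rintro ⟨O, hO⟩
    obtain ⟨r, _, h⟩ := Finset.mem_image.1 hO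
    exact ⟨r, Subtype.ext h⟩
  choose r hr using hr
  have hd : ∀ β : B, ∃ n : ℕ, (σ ^ n) (r (q β)) = β := by
    intro β
    have h : orbit σ (r (q β)) = orbit σ β := congrArg Subtype.val (hr (q β))
    have : β ∈ orbit σ (r (q β)) := h ▸ s18_mem_self σ β
    exact this
  choose d hd using hd
  have hq : ∀ β, q (σ β) = q β := fun β => Subtype.ext (s18_orbit_apply σ β)
  have hrO : ∀ O : I, orbit σ (r O) = O.1 := fun O => congrArg Subtype.val (hr O)
  let φ : (B → ℤ) →+ (∀ O : I, ZMod (p ^ O.1.ncard - 1)) :=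
    { toFun := fun f O => ∑ β : B, if q β = O then ((f β * (p : ℤ) ^ d β : ℤ) : ZMod _) else 0
      map_zero' := by ext O; simp
      map_add' := by
        intro f g; ext O
        simp only [Pi.add_apply, ← Finset.sum_add_distrib]
        refine Finset.sum_congr rfl fun β _ => ?_
        split_ifs
        · push_cast; ring
        · simp }
  have hφ : ∀ f O, φ f O = ∑ β : B, if q β = O then ((f β * (p : ℤ) ^ d β : ℤ) : ZMod _) else 0 :=
    fun _ _ => rfl
  have hφs : ∀ β (O : I) (c : ℤ), φ (Pi.single β c) O
      = if q β = O then ((c * (p : ℤ) ^ d β : ℤ) : ZMod _) else 0 := by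
    intro β O c
    rw [hφ, Finset.sum_eq_single β]
    · simp
    · intro b _ hb; simp [Pi.single_eq_of_ne hb]
    · simp
  have hpw : ∀ (O : I) (a b : ℕ), (σ ^ a) (r O) = (σ ^ b) (r O) →
      (p : ZMod (p ^ O.1.ncard - 1)) ^ a = p ^ b := by
    intro O a b h
    have := s18_pow_eq σ p hp0 (r O) a b h
    rwa [hrO O] at this
  have hle : AddSubgroup.closure (Set.range (hZ σ p)) ≤ φ.ker := by
    rw [AddSubgroup.closure_le]
    rintro _ ⟨β, rfl⟩
    obtain ⟨γ, rfl⟩ := σ.surjective β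
    rw [SetLike.mem_coe, AddMonoidHom.mem_ker, s18_hZ, map_add, map_neg, map_zsmul]
    ext O
    simp only [Pi.add_apply, Pi.neg_apply, Pi.smul_apply, hφs, Pi.zero_apply,
      s18_inv, hq]
    split_ifs with h
    · subst h
      have h3 := hpw (q γ) (d (σ γ)) (d γ + 1) (by
        have := hd (σ γ)
        rw [hq] at this
        rw [this, pow_succ', Equiv.Perm.mul_apply, hd])
      push_cast
      rw [one_mul, one_mul, h3, pow_succ, zsmul_eq_mul]
      push_cast
      ring
    · simp
  have hsurj : Function.Surjective φ := by
    intro g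
    choose z hz using fun O => ZMod.intCast_surjective (g O)
    refine ⟨∑ O : I, Pi.single (r O) (z O), ?_⟩
    rw [map_sum]
    ext O
    rw [Finset.sum_apply, Finset.sum_eq_single O]
    · rw [hφs, if_pos (hr O)]
      have h3 := hpw O (d (r O)) 0 (by
        have := hd (r O)
        rw [hr] at this
        rw [this]; rfl)
      push_cast
      rw [h3, hz, pow_zero, mul_one]
    · intro O' _ h
      rw [hφs, if_neg]
      rw [hr]; exact h
    · simp
  have hge : φ.ker ≤ AddSubgroup.closure (Set.range (hZ σ p)) := by
    intro f hf
    set N := AddSubgroup.closure (Set.range (hZ σ p)) with hN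
    let π := QuotientAddGroup.mk' N
    have hs : ∀ β, π (Pi.single (σ β) 1) = (p : ℤ) • π (Pi.single β 1) := by
      intro β
      have h0 : π (hZ σ p (σ β)) = 0 :=
        (QuotientAddGroup.eq_zero_iff _).2 (AddSubgroup.subset_closure ⟨_, rfl⟩)
      rw [s18_hZ, map_add, map_neg, map_zsmul, s18_inv] at h0
      exact (neg_add_eq_zero.1 h0)
    have hs2 : ∀ (n : ℕ) β, π (Pi.single ((σ ^ n) β) 1) = ((p : ℤ) ^ n) • π (Pi.single β 1) := by
      intro n β
      induction n with
      | zero => simp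
      | succ n ih => rw [pow_succ', Equiv.Perm.mul_apply, hs, ih, smul_smul, pow_succ']
    have hkill : ∀ O : I, ((p ^ O.1.ncard - 1 : ℕ) : ℤ) • π (Pi.single (r O) 1) = 0 := by
      intro O
      have h1 := hs2 O.1.ncard (r O)
      rw [(s18_period σ (r O) _).2 (by rw [hrO])] at h1
      rw [Nat.cast_sub (Nat.one_le_pow _ _ hp0), sub_smul]
      push_cast
      rw [← h1, one_smul, sub_self]
    have hfπ : π f = ∑ O : I, (∑ β : B, if q β = O then f β * (p : ℤ) ^ d β else 0) •
        π (Pi.single (r O) 1) := by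
      have hf1 : f = ∑ β : B, f β • Pi.single β (1 : ℤ) := by
        ext τ
        simp [Finset.sum_apply, Pi.single_apply]
      conv_lhs => rw [hf1]
      rw [map_sum]
      refine Eq.trans ?_ (Finset.sum_congr rfl fun O _ => s18_sum_smul _ _).symm
      rw [Finset.sum_comm]
      refine Finset.sum_congr rfl fun β _ => ?_
      rw [Finset.sum_eq_single (q β)]
      · rw [if_pos rfl, map_zsmul, mul_smul, ← hs2, hd]
      · intro O _ h
        rw [if_neg h.symm, zero_smul]
      · simp
    rw [← QuotientAddGroup.eq_zero_iff]
    change π f = 0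
    rw [hfπ]
    refine Finset.sum_eq_zero fun O _ => ?_
    have h1 : φ f O = 0 := congrFun hf O
    have h2 : ((∑ β : B, if q β = O then f β * (p : ℤ) ^ d β else 0 : ℤ) :
        ZMod (p ^ O.1.ncard - 1)) = 0 := by
      rw [← h1, hφ, Int.cast_sum]
      refine Finset.sum_congr rfl fun β _ => ?_
      split_ifs <;> simp
    rw [ZMod.intCast_zmod_eq_zero_iff_dvd] at h2
    obtain ⟨m, hm⟩ := h2
    rw [hm, mul_comm, mul_smul, hkill, smul_zero]
  rw [le_antisymm hle hge]
  rw [Nat.card_congr (QuotientAddGroup.quotientKerEquivOfSurjective φ hsurj).toEquiv, Nat.card_pi]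
  simp only [Nat.card_zmod]
  convert Finset.prod_coe_sort (Finset.univ.image (fun β : B => orbit σ β))
    (fun O => p ^ O.ncard - 1)

end S18

end GO

/-- the family `{h_β : β ∈ 𝔹}` is linearly independent over `ℚ` (hence a
basis of `ℚ^𝔹`), and `ℤ^𝔹` modulo the subgroup generated by the `h_β` is a finite abelian
group of order `∏_𝔭 (p^{|𝔹_𝔭|} − 1)`. -/
theorem statement18 {B : Type*} [Fintype B] [DecidableEq B] [Nonempty B]
    (σ : Equiv.Perm B) (p : ℕ) (hp : p.Prime) :
    LinearIndependent ℚ (fun β : B => GO.hsimple σ p β) ∧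
    Submodule.span ℚ (Set.range fun β : B => GO.hsimple σ p β) = ⊤ ∧
    Nat.card ((B → ℤ) ⧸ AddSubgroup.closure (Set.range (GO.hZ σ p)))
      = ∏ O ∈ Finset.univ.image (fun β : B => GO.orbit σ β), (p ^ O.ncard - 1) := by
  have h := GO.s18_linInd σ p hp
  refine ⟨h, ?_, GO.s18_card σ p hp⟩
  exact h.span_eq_top_of_card_eq_finrank (by simp)
end
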